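/- arXiv:math/0403007 — 2 statements merged into one kernel-verified Lean document; each statement's English description precedes it below -/
import Mathlib

section
/- Let k and n be positive integers with k > 2n, and let a : ℝ³ → ℂ be a smooth compactly supported function. Then, as λ → +∞, ∫₀^∞ ∫_{ℝ²} e^{iλ t rᵏ v} a(t,r,v) r^{2n−1} dt dv dr = λ^{−2n/k} d(a) + O(λ^{−(2n+1)/k} (log λ)²), where the leading coefficient is d(a) = (Γ(2n/k)/k) ∫_{ℝ²} |t v|^{−2n/k} exp(i π (n/k) sign(t v)) a(t,0,v) dt dv (this double integral converges absolutely since 2n/k < 1 and a has compact support). -/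
open MeasureTheory

/-!
For fixed `r` the inner integral is `S(a(·, r, ·), λ rᵏ)` with
`S(b, μ) = ∫∫ e^{iμtv} b(t, v) dt dv`. Integrating by parts in `v` bounds the `v`-integral by
`1 / (1 + μ|t|)`, so `S(b, μ)` decays like `log μ / μ`. Freezing the amplitude at
`r = 0` and substituting `μ = λ rᵏ` leaves the Mellin transform of `S(a(·, 0, ·), μ)` at
`2n/k ∈ (0, 1)`. Damping it by `e^{-εμ}` allows the order of integration to be exchanged;
the `μ`-integral is then `Γ(s) (ε - itv)^{-s}`, and `ε → 0` gives `d(a)`. The amplitude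
`a(·, r, ·) - a(·, 0, ·)` is `O(min(r, 1))` together with its first derivatives, which gains a
factor `λ^{-1/k}`. One logarithm of the remainder is the one in the decay of `S`; the other comes
from `∫ dr / r` near `r = 0` in the borderline case `k = 2n + 1`.
-/

open Set Filter Topology
open Complex (I)

/-- The rate `(1 + log (1 + μ)) / (1 + μ)` at which `saddleIntegral b μ` decays. -/
noncomputable def logDecay (μ : ℝ) : ℝ := (1 + Real.log (1 + μ)) / (1 + μ)

lemma logDecay_nonneg {μ : ℝ} (hμ : 0 ≤ μ) : 0 ≤ logDecay μ := by
  have := Real.log_nonneg (x := 1 + μ) (by linarith)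
  unfold logDecay
  positivity

lemma logDecay_le_one {μ : ℝ} (hμ : 0 ≤ μ) : logDecay μ ≤ 1 := by
  have := Real.log_le_sub_one_of_pos (x := 1 + μ) (by linarith)
  rw [logDecay, div_le_one (by linarith)]
  linarith

lemma continuousOn_logDecay : ContinuousOn logDecay (Ioi 0) := by
  have hne (μ : ℝ) (hμ : μ ∈ Ioi 0) : 1 + μ ≠ 0 := (add_pos one_pos hμ).ne'
  unfold logDecay
  fun_prop (disch := assumption)

lemma logDecay_le_rpow {δ μ : ℝ} (hδ : 0 < δ) (hδ1 : δ < 1) (hμ : 0 < μ) :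
    logDecay μ ≤ (1 + 1 / δ) * μ ^ (δ - 1) := by
  have hlog : Real.log (1 + μ) ≤ (1 + μ) ^ δ / δ := Real.log_le_rpow_div (by linarith) hδ
  have hone : 1 ≤ (1 + μ) ^ δ := Real.one_le_rpow (by linarith) hδ.le
  calc logDecay μ ≤ ((1 + μ) ^ δ + (1 + μ) ^ δ / δ) / (1 + μ) := by
        unfold logDecay
        gcongr
    _ = (1 + 1 / δ) * (1 + μ) ^ (δ - 1) := by
        rw [Real.rpow_sub_one (by positivity)]
        ring
    _ ≤ (1 + 1 / δ) * μ ^ (δ - 1) := by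
        gcongr ?_ * ?_
        exact Real.rpow_le_rpow_of_nonpos hμ (by linarith) (by linarith)

lemma integrableOn_rpow_mul_logDecay {s : ℝ} (hs : 0 < s) (hs1 : s < 1) :
    IntegrableOn (fun μ => μ ^ (s - 1) * logDecay μ) (Ioi 0) := by
  have hinfty : logDecay =O[atTop] fun μ => μ ^ (-((s + 1) / 2)) := by
    refine .of_bound (1 + 1 / ((1 - s) / 2)) ?_
    filter_upwards [eventually_gt_atTop 0] with μ hμ
    rw [Real.norm_of_nonneg (logDecay_nonneg hμ.le), Real.norm_of_nonneg (by positivity)]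
    convert logDecay_le_rpow (δ := (1 - s) / 2) (by linarith) (by linarith) hμ using 3
    ring
  have hzero : logDecay =O[𝓝[>] 0] fun μ => μ ^ (-(0 : ℝ)) := by
    refine .of_bound 1 ?_
    filter_upwards [self_mem_nhdsWithin] with μ (hμ : 0 < μ)
    simpa [Real.norm_of_nonneg (logDecay_nonneg hμ.le)] using logDecay_le_one hμ.le
  exact mellin_convergent_of_isBigO_scalar
    (continuousOn_logDecay.locallyIntegrableOn measurableSet_Ioi) hinfty (by linarith) hzero hs

lemma mellinConvergent_logDecay {s : ℝ} (hs : 0 < s) (hs1 : s < 1) :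
    MellinConvergent (fun μ => (logDecay μ : ℂ)) s := by
  refine (integrableOn_rpow_mul_logDecay hs hs1).ofReal.congr
    ((ae_restrict_iff' measurableSet_Ioi).2 (.of_forall fun μ (hμ : 0 < μ) => ?_))
  simp [Complex.ofReal_cpow hμ.le]

lemma integral_inv_one_add_mul_le_logDecay {R μ : ℝ} (hR : 1 ≤ R) (hμ : 0 ≤ μ) :
    ∫ t in Ioc 0 R, (1 + μ * t)⁻¹ ≤ 2 * R * logDecay μ := by
  have hR0 : 0 ≤ R := by linarith
  have hpos (t : ℝ) (ht : t ∈ uIcc 0 R) : 0 < 1 + μ * t := by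
    rw [uIcc_of_le hR0] at ht
    nlinarith [mul_nonneg hμ ht.1]
  have hderiv (t : ℝ) (ht : t ∈ uIcc 0 R) :
      HasDerivAt (fun t => t + Real.log (1 + μ * t)) (1 + μ / (1 + μ * t)) t :=
    (hasDerivAt_id t).add ((((hasDerivAt_id t).const_mul μ).const_add 1).log (hpos t ht).ne'
      |>.congr_deriv (by simp))
  have hcont : ContinuousOn (fun t => (1 + μ * t)⁻¹) (uIcc 0 R) :=
    ContinuousOn.inv₀ (by fun_prop) fun t ht => (hpos t ht).ne'
  have hcont' : ContinuousOn (fun t => 1 + μ / (1 + μ * t)) (uIcc 0 R) :=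
    ContinuousOn.add continuousOn_const (continuousOn_const.div (by fun_prop) fun t ht =>
      (hpos t ht).ne')
  have hmono : (1 + μ) * ∫ t in (0 : ℝ)..R, (1 + μ * t)⁻¹ ≤ R + Real.log (1 + μ * R) := by
    calc (1 + μ) * ∫ t in (0 : ℝ)..R, (1 + μ * t)⁻¹
        = ∫ t in (0 : ℝ)..R, (1 + μ) * (1 + μ * t)⁻¹ :=
          (intervalIntegral.integral_const_mul _ _).symm
      _ ≤ ∫ t in (0 : ℝ)..R, (1 + μ / (1 + μ * t)) := by
          refine intervalIntegral.integral_mono_on hR0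
            (hcont.intervalIntegrable.const_mul _) hcont'.intervalIntegrable fun t ht => ?_
          have := hpos t (Icc_subset_uIcc ht)
          rw [add_mul, one_mul, div_eq_mul_inv]
          gcongr
          exact inv_le_one_of_one_le₀ (by nlinarith [mul_nonneg hμ ht.1])
      _ = R + Real.log (1 + μ * R) := by
          rw [intervalIntegral.integral_eq_sub_of_hasDerivAt hderiv hcont'.intervalIntegrable]
          simp
  have hlog : Real.log (1 + μ * R) ≤ (R - 1) + Real.log (1 + μ) := by
    calc Real.log (1 + μ * R) ≤ Real.log (R * (1 + μ)) :=
          Real.log_le_log (by positivity) (by linarith)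
      _ = Real.log R + Real.log (1 + μ) := Real.log_mul (by positivity) (by positivity)
      _ ≤ (R - 1) + Real.log (1 + μ) := by gcongr; exact Real.log_le_sub_one_of_pos (by linarith)
  have hlog0 : 0 ≤ Real.log (1 + μ) := Real.log_nonneg (by linarith)
  rw [← intervalIntegral.integral_of_le hR0, logDecay, ← mul_div_assoc,
    le_div_iff₀' (by positivity)]
  nlinarith [mul_nonneg (sub_nonneg.2 hR) hlog0]

open FourierTransform in
lemma integral_exp_mul_eq_fourier (f : ℝ → ℂ) (x : ℝ) :
    ∫ v, Complex.exp (I * (x * v : ℝ)) * f v = 𝓕 f (-x / (2 * Real.pi)) := by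
  rw [Real.fourier_real_eq_integral_exp_smul]
  refine integral_congr_ae (.of_forall fun v => ?_)
  have : -2 * Real.pi * v * (-x / (2 * Real.pi)) = x * v := by field_simp
  simp only [this, smul_eq_mul, mul_comm I]

lemma norm_integral_exp_mul_le (f : ℝ → ℂ) (x : ℝ) :
    ‖∫ v, Complex.exp (I * (x * v : ℝ)) * f v‖ ≤ ∫ v, ‖f v‖ := by
  refine (norm_integral_le_integral_norm _).trans_eq ?_
  simp_rw [norm_mul, Complex.norm_exp_I_mul_ofReal, one_mul]

lemma integral_exp_mul_deriv {f : ℝ → ℂ} (hf : Differentiable ℝ f) (hfi : Integrable f)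
    (hfi' : Integrable (deriv f)) (x : ℝ) :
    ∫ v, Complex.exp (I * (x * v : ℝ)) * deriv f v =
      -I * x * ∫ v, Complex.exp (I * (x * v : ℝ)) * f v := by
  have : (Real.pi : ℂ) ≠ 0 := mod_cast Real.pi_ne_zero
  rw [integral_exp_mul_eq_fourier, integral_exp_mul_eq_fourier, Real.fourier_deriv hfi hf hfi']
  simp only [smul_eq_mul]
  push_cast
  field_simp

lemma one_add_abs_mul_norm_integral_exp_mul_le {f : ℝ → ℂ} (hf : Differentiable ℝ f)
    (hfi : Integrable f) (hfi' : Integrable (deriv f)) (x : ℝ) :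
    (1 + |x|) * ‖∫ v, Complex.exp (I * (x * v : ℝ)) * f v‖ ≤
      (∫ v, ‖f v‖) + ∫ v, ‖deriv f v‖ := by
  have hderiv := norm_integral_exp_mul_le (deriv f) x
  rw [integral_exp_mul_deriv hf hfi hfi'] at hderiv
  simp only [norm_mul, norm_neg, Complex.norm_I, one_mul, Complex.norm_real, Real.norm_eq_abs]
    at hderiv
  linarith [norm_integral_exp_mul_le f x]

lemma integral_norm_le_of_support_subset_Icc {E : Type*} [NormedAddCommGroup E] {f : ℝ → E}
    {R M : ℝ} (hR : 0 ≤ R) (hsupp : Function.support f ⊆ Icc (-R) R) (hM : ∀ v, ‖f v‖ ≤ M) :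
    ∫ v, ‖f v‖ ≤ 2 * R * M := by
  have hzero (v : ℝ) (hv : v ∉ Icc (-R) R) : ‖f v‖ = 0 := by
    rw [Function.notMem_support.1 fun h => hv (hsupp h), norm_zero]
  have hvol : volume.real (Icc (-R) R) = 2 * R := by
    rw [Real.volume_real_Icc_of_le (by linarith)]
    ring
  rw [← setIntegral_eq_integral_of_forall_compl_eq_zero hzero]
  have hle := norm_setIntegral_le_of_norm_le_const (μ := volume) (s := Icc (-R) R)
    (f := fun v => ‖f v‖) (C := M) (by simp) (fun v _ => by simpa using hM v)
  rw [hvol] at hle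
  linarith [Real.le_norm_self (∫ v in Icc (-R) R, ‖f v‖)]

lemma norm_integral_exp_mul_le_of_support_subset_Icc {f : ℝ → ℂ} {R M : ℝ} (hR : 0 ≤ R)
    (hf : ContDiff ℝ 1 f) (hsupp : Function.support f ⊆ Icc (-R) R) (hM : ∀ v, ‖f v‖ ≤ M)
    (hM' : ∀ v, ‖deriv f v‖ ≤ M) (x : ℝ) :
    ‖∫ v, Complex.exp (I * (x * v : ℝ)) * f v‖ ≤ 4 * R * M * (1 + |x|)⁻¹ := by
  have hcompact : HasCompactSupport f := .of_support_subset_isCompact isCompact_Icc hsupp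
  have hsupp' : Function.support (deriv f) ⊆ Icc (-R) R :=
    support_deriv_subset.trans (closure_minimal hsupp isClosed_Icc)
  have hfourier := one_add_abs_mul_norm_integral_exp_mul_le (hf.differentiable one_ne_zero)
    (hf.continuous.integrable_of_hasCompactSupport hcompact)
    ((hf.continuous_deriv le_rfl).integrable_of_hasCompactSupport hcompact.deriv) x
  rw [← div_eq_mul_inv, le_div_iff₀' (by positivity)]
  linarith [integral_norm_le_of_support_subset_Icc hR hsupp hM,
    integral_norm_le_of_support_subset_Icc hR hsupp' hM']

/-- The oscillatory integral `∫∫ e^{iμtv} b(t, v) dt dv` whose phase `tv` has a nondegenerate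
saddle at the origin. -/
noncomputable def saddleIntegral (b : ℝ × ℝ → ℂ) (μ : ℝ) : ℂ :=
  ∫ p : ℝ × ℝ, Complex.exp (I * (μ * p.1 * p.2 : ℝ)) * b p

section SaddleIntegral

variable {b : ℝ × ℝ → ℂ}

lemma integrable_exp_mul (hb : Integrable b) (μ : ℝ) :
    Integrable fun p : ℝ × ℝ => Complex.exp (I * (μ * p.1 * p.2 : ℝ)) * b p :=
  hb.bdd_mul (c := 1) (by fun_prop) (.of_forall fun _ => (Complex.norm_exp_I_mul_ofReal _).le)

lemma saddleIntegral_eq_integral_integral (hb : Integrable b) (μ : ℝ) :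
    saddleIntegral b μ = ∫ t, ∫ v, Complex.exp (I * (μ * t * v : ℝ)) * b (t, v) :=
  integral_prod _ (integrable_exp_mul hb μ)

lemma saddleIntegral_sub {b' : ℝ × ℝ → ℂ} (hb : Integrable b) (hb' : Integrable b') (μ : ℝ) :
    saddleIntegral (b - b') μ = saddleIntegral b μ - saddleIntegral b' μ := by
  simp only [saddleIntegral, Pi.sub_apply, mul_sub]
  exact integral_sub (integrable_exp_mul hb μ) (integrable_exp_mul hb' μ)

lemma measurable_saddleIntegral {X : Type*} [MeasurableSpace X] {f : X × ℝ × ℝ → ℂ} {g : X → ℝ}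
    (hf : Measurable f) (hg : Measurable g) :
    Measurable fun x => saddleIntegral (fun p => f (x, p)) (g x) := by
  have hjoint : Measurable fun q : X × ℝ × ℝ =>
      Complex.exp (I * (g q.1 * q.2.1 * q.2.2 : ℝ)) * f q := by fun_prop
  exact hjoint.stronglyMeasurable.integral_prod_right.measurable

lemma norm_integral_section_le {R M : ℝ} (hR : 0 ≤ R) (hb : ContDiff ℝ 1 b)
    (hsupp : Function.support b ⊆ Metric.closedBall 0 R) (hM : ∀ p, ‖b p‖ ≤ M)
    (hM' : ∀ p, ‖fderiv ℝ b p‖ ≤ M) (x t : ℝ) :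
    ‖∫ v, Complex.exp (I * (x * v : ℝ)) * b (t, v)‖ ≤ 4 * R * M * (1 + |x|)⁻¹ := by
  refine norm_integral_exp_mul_le_of_support_subset_Icc hR (by fun_prop) (fun v hv => ?_)
    (fun v => hM _) (fun v => ?_) x
  · have := mem_closedBall_zero_iff.1 (hsupp hv)
    exact abs_le.1 ((norm_snd_le (t, v)).trans this)
  · have hline : HasDerivAt (fun v => (t, v)) ((0, 1) : ℝ × ℝ) v :=
      (hasDerivAt_const v t).prodMk (hasDerivAt_id v)
    have hderiv : HasDerivAt (fun v => b (t, v)) (fderiv ℝ b (t, v) (0, 1)) v :=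
      (hb.differentiable one_ne_zero (t, v)).hasFDerivAt.comp_hasDerivAt v hline
    rw [hderiv.deriv]
    exact ((fderiv ℝ b (t, v)).le_of_opNorm_le (hM' _) _).trans_eq (by simp)

theorem norm_saddleIntegral_le {R M μ : ℝ} (hR : 1 ≤ R) (hb : ContDiff ℝ 1 b)
    (hsupp : Function.support b ⊆ Metric.closedBall 0 R) (hM : ∀ p, ‖b p‖ ≤ M)
    (hM' : ∀ p, ‖fderiv ℝ b p‖ ≤ M) (hμ : 0 ≤ μ) :
    ‖saddleIntegral b μ‖ ≤ 16 * R ^ 2 * M * logDecay μ := by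
  have hR0 : 0 ≤ R := by linarith
  have hM0 : 0 ≤ M := (norm_nonneg _).trans (hM 0)
  let g (t : ℝ) : ℝ := (Iic R).indicator (fun t => (1 + μ * t)⁻¹) t
  have hgint : Integrable fun t => g |t| := by
    have hcont : Continuous fun t : ℝ => (1 + μ * |t|)⁻¹ :=
      Continuous.inv₀ (by fun_prop) fun t => by positivity
    refine ((integrable_indicator_iff (measurableSet_Icc (a := -R) (b := R))).2
      hcont.continuousOn.integrableOn_Icc).congr (.of_forall fun t => ?_)
    simp only [g, indicator, mem_Icc, mem_Iic, abs_le]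
  have hgle : ∫ t, g |t| ≤ 4 * R * logDecay μ := by
    rw [integral_comp_abs, setIntegral_indicator measurableSet_Iic, Ioi_inter_Iic]
    linarith [integral_inv_one_add_mul_le_logDecay hR hμ]
  have hsection (t : ℝ) :
      ‖∫ v, Complex.exp (I * (μ * t * v : ℝ)) * b (t, v)‖ ≤ 4 * R * M * g |t| := by
    by_cases ht : |t| ≤ R
    · simpa [g, ht, abs_mul, abs_of_nonneg hμ] using
        norm_integral_section_le hR0 hb hsupp hM hM' (μ * t) t
    · have hzero (v : ℝ) : b (t, v) = 0 := by
        refine Function.notMem_support.1 fun h => ht ?_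
        exact (norm_fst_le (t, v)).trans (mem_closedBall_zero_iff.1 (hsupp h))
      simp [g, ht, hzero]
  have hbint : Integrable b := hb.continuous.integrable_of_hasCompactSupport
    (.of_support_subset_isCompact (isCompact_closedBall 0 R) hsupp)
  rw [saddleIntegral_eq_integral_integral hbint]
  calc _ ≤ ∫ t, 4 * R * M * g |t| :=
        norm_integral_le_of_norm_le (hgint.const_mul _) (.of_forall hsection)
    _ = 4 * R * M * ∫ t, g |t| := integral_const_mul _ _
    _ ≤ 4 * R * M * (4 * R * logDecay μ) := by gcongr
    _ = 16 * R ^ 2 * M * logDecay μ := by ring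

theorem exists_norm_saddleIntegral_le (hb : ContDiff ℝ 1 b) (hcb : HasCompactSupport b) :
    ∃ K, ∀ μ, 0 ≤ μ → ‖saddleIntegral b μ‖ ≤ K * logDecay μ := by
  obtain ⟨R, hR⟩ := hcb.isCompact.isBounded.subset_closedBall 0
  obtain ⟨M, hM⟩ := hcb.exists_bound_of_continuous hb.continuous
  obtain ⟨M', hM'⟩ := (hcb.fderiv ℝ).exists_bound_of_continuous (hb.continuous_fderiv one_ne_zero)
  refine ⟨_, fun μ hμ => norm_saddleIntegral_le (R := max R 1) (M := max M M') (le_max_right _ _) hb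
    ?_ (fun p => (hM p).trans (le_max_left _ _)) (fun p => (hM' p).trans (le_max_right _ _)) hμ⟩
  exact (subset_tsupport b).trans (hR.trans (Metric.closedBall_subset_closedBall (le_max_left _ _)))

end SaddleIntegral

lemma norm_cpow_mul_exp_neg_mul (a z : ℂ) {x : ℝ} (hx : 0 < x) :
    ‖(x : ℂ) ^ a * Complex.exp (-(z * x))‖ = x ^ a.re * Real.exp (-(z.re * x)) := by
  simp [Complex.norm_cpow_eq_rpow_re_of_pos hx, Complex.norm_exp]

lemma mellinConvergent_exp_neg_mul {a z : ℂ} (ha : 0 < a.re) (hz : 0 < z.re) :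
    MellinConvergent (fun x : ℝ => Complex.exp (-(z * x))) a := by
  have hmaj := integrableOn_rpow_mul_exp_neg_mul_rpow (s := a.re - 1) (by linarith) one_pos hz
  refine hmaj.mono' (by fun_prop) (ae_restrict_of_forall_mem measurableSet_Ioi fun x hx => ?_)
  rw [smul_eq_mul, norm_cpow_mul_exp_neg_mul _ _ hx]
  simp

lemma hasDerivAt_mellin_exp_neg_mul {a z : ℂ} (ha : 0 < a.re) (hz : 0 < z.re) :
    HasDerivAt (fun z : ℂ => mellin (fun x : ℝ => Complex.exp (-(z * x))) a)
      (-mellin (fun x : ℝ => Complex.exp (-(z * x))) (a + 1)) z := by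
  have hmaj := integrableOn_rpow_mul_exp_neg_mul_rpow (s := a.re) (by linarith) one_pos
    (half_pos hz)
  have hnhds : {w : ℂ | z.re / 2 < w.re} ∈ 𝓝 z :=
    (isOpen_lt continuous_const Complex.continuous_re).mem_nhds (half_lt_self hz)
  rw [mellin, ← integral_neg]
  refine (hasDerivAt_integral_of_dominated_loc_of_deriv_le
    (F := fun (w : ℂ) (x : ℝ) => (x : ℂ) ^ (a - 1) • Complex.exp (-(w * x)))
    (F' := fun (w : ℂ) (x : ℝ) => -((x : ℂ) ^ (a + 1 - 1) • Complex.exp (-(w * x))))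
    hnhds (.of_forall fun w => by fun_prop)
    (mellinConvergent_exp_neg_mul ha hz).integrable (by fun_prop)
    (ae_restrict_of_forall_mem measurableSet_Ioi fun x hx w hw => ?_) hmaj
    (ae_restrict_of_forall_mem measurableSet_Ioi fun x hx w _ => ?_)).2
  · have hx0 : 0 < x := hx
    have hw' : z.re / 2 < w.re := hw
    rw [add_sub_cancel_right, norm_neg, smul_eq_mul, norm_cpow_mul_exp_neg_mul _ _ hx0,
      Real.rpow_one, neg_mul]
    gcongr
  · have hx0 : (x : ℂ) ≠ 0 := mod_cast (hx : 0 < x).ne'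
    have hlin : HasDerivAt (fun w : ℂ => -(w * x)) (-(x : ℂ)) w := by
      simpa using ((hasDerivAt_id w).mul_const (x : ℂ)).fun_neg
    refine (hlin.cexp.const_mul ((x : ℂ) ^ (a - 1))).congr_deriv ?_
    rw [add_sub_cancel_right, Complex.cpow_sub _ _ hx0, Complex.cpow_one, smul_eq_mul]
    field_simp

-- Both sides are holomorphic in `z` and agree for real `z`.
theorem mellin_exp_neg_mul {a z : ℂ} (ha : 0 < a.re) (hz : 0 < z.re) :
    mellin (fun x : ℝ => Complex.exp (-(z * x))) a = (1 / z) ^ a * Complex.Gamma a := by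
  have hopen : IsOpen {w : ℂ | 0 < w.re} := isOpen_lt continuous_const Complex.continuous_re
  have hleft : AnalyticOnNhd ℂ (fun w : ℂ => mellin (fun x : ℝ => Complex.exp (-(w * x))) a)
      {w : ℂ | 0 < w.re} :=
    DifferentiableOn.analyticOnNhd (fun w hw => (hasDerivAt_mellin_exp_neg_mul ha
      hw).differentiableAt.differentiableWithinAt) hopen
  have hright : AnalyticOnNhd ℂ (fun w : ℂ => (1 / w) ^ a * Complex.Gamma a)
      {w : ℂ | 0 < w.re} := by
    refine DifferentiableOn.analyticOnNhd (fun w (hw : 0 < w.re) => ?_) hopen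
    have hw0 : w ≠ 0 := fun h => by simp [h] at hw
    have hslit : 1 / w ∈ Complex.slitPlane := by
      refine .inl ?_
      rw [one_div, Complex.inv_re]
      exact div_pos hw (Complex.normSq_pos.2 hw0)
    exact DifferentiableAt.differentiableWithinAt (by fun_prop (disch := assumption))
  have hofReal : Tendsto (fun r : ℝ => (r : ℂ)) (𝓝[≠] 1) (𝓝[≠] 1) :=
    tendsto_nhdsWithin_of_tendsto_nhds_of_eventually_within _
      ((Complex.continuous_ofReal.tendsto' 1 1 Complex.ofReal_one).mono_left nhdsWithin_le_nhds)
      (eventually_mem_nhdsWithin.mono fun r hr => by simpa using hr)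
  have hreal : ∀ᶠ r : ℝ in 𝓝[≠] 1, mellin (fun x : ℝ => Complex.exp (-(r * x))) a =
      (1 / (r : ℂ)) ^ a * Complex.Gamma a := by
    filter_upwards [nhdsWithin_le_nhds (lt_mem_nhds one_pos)] with r hr
    exact Complex.integral_cpow_mul_exp_neg_mul_Ioi ha hr
  exact hleft.eqOn_of_preconnected_of_frequently_eq hright
    (convex_halfSpace_re_gt 0).isPreconnected (z₀ := 1) (by simp)
    (hofReal.frequently hreal.frequently) hz

lemma mellinConvergent_of_norm_le {E F : Type*} [NormedAddCommGroup E] [NormedSpace ℂ E]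
    [NormedAddCommGroup F] [NormedSpace ℂ F] {f : ℝ → E} {g : ℝ → F} {s : ℂ}
    (hf : AEStronglyMeasurable f (volume.restrict (Ioi 0))) (hg : MellinConvergent g s)
    (hfg : ∀ x, 0 < x → ‖f x‖ ≤ ‖g x‖) : MellinConvergent f s := by
  have hcpow : Measurable fun x : ℝ => (x : ℂ) ^ (s - 1) := by fun_prop
  refine hg.integrable.mono (hcpow.aestronglyMeasurable.smul hf)
    (ae_restrict_of_forall_mem measurableSet_Ioi fun x hx => ?_)
  rw [norm_smul, norm_smul]
  gcongr
  exact hfg x hx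

lemma tendsto_mellin_exp_neg_mul_smul {E : Type*} [NormedAddCommGroup E] [NormedSpace ℂ E]
    {f : ℝ → E} {s : ℂ} (hf : MellinConvergent f s) :
    Tendsto (fun ε : ℝ => mellin (fun x => Complex.exp (-(ε * x : ℝ)) • f x) s) (𝓝[>] 0)
      (𝓝 (mellin f s)) := by
  have hcomm (ε x : ℝ) : (x : ℂ) ^ (s - 1) • Complex.exp (-(ε * x : ℝ)) • f x =
      Complex.exp (-(ε * x : ℝ)) • (x : ℂ) ^ (s - 1) • f x := smul_comm _ _ _
  simp only [mellin, hcomm]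
  refine tendsto_integral_filter_of_dominated_convergence _
    (.of_forall fun ε => AEStronglyMeasurable.smul (by fun_prop) hf.aestronglyMeasurable) ?_
    hf.norm (.of_forall fun x => ?_)
  · filter_upwards [self_mem_nhdsWithin] with ε (hε : 0 < ε)
    refine ae_restrict_of_forall_mem measurableSet_Ioi fun x (hx : 0 < x) => ?_
    rw [norm_smul, ← Complex.ofReal_neg, Complex.norm_exp_ofReal]
    exact mul_le_of_le_one_left (norm_nonneg _) (Real.exp_le_one_iff.2 (by nlinarith))
  · have hcont : Continuous fun ε : ℝ => Complex.exp (-(ε * x : ℝ)) • (x : ℂ) ^ (s - 1) • f x := by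
      fun_prop
    exact (hcont.tendsto' 0 _ (by simp)).mono_left nhdsWithin_le_nhds

/-- The singular kernel `|y|^{-s} e^{iπ(s/2) sign y}`, which for `y ≠ 0` is the boundary value at
`ε = 0` of `(1 / (ε - iy))^s`. -/
noncomputable def saddleKernel (s y : ℝ) : ℂ :=
  ((|y| ^ (-s) : ℝ) : ℂ) * Complex.exp (I * (Real.pi * (s / 2) * Real.sign y : ℝ))

lemma norm_saddleKernel (s y : ℝ) : ‖saddleKernel s y‖ = |y| ^ (-s) := by
  rw [saddleKernel, norm_mul, Complex.norm_exp_I_mul_ofReal, mul_one, Complex.norm_real,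
    Real.norm_of_nonneg (by positivity)]

lemma measurable_saddleKernel (s : ℝ) : Measurable (saddleKernel s) := by
  have hsign : Measurable Real.sign :=
    .ite measurableSet_Iio measurable_const (.ite measurableSet_Ioi measurable_const
      measurable_const)
  unfold saddleKernel
  fun_prop

lemma one_div_neg_I_mul_cpow (s : ℝ) {y : ℝ} (hy : y ≠ 0) :
    (1 / -(I * y)) ^ (s : ℂ) = saddleKernel s y := by
  have hyc : (y : ℂ) ≠ 0 := mod_cast hy
  have hpolar : 1 / -(I * y) = ((|y|⁻¹ : ℝ) : ℂ) * (I * Real.sign y) := by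
    rcases hy.lt_or_gt with hneg | hpos
    · rw [abs_of_neg hneg, Real.sign_of_neg hneg]
      push_cast
      field_simp
      linear_combination -Complex.I_sq
    · rw [abs_of_pos hpos, Real.sign_of_pos hpos]
      push_cast
      field_simp
      linear_combination -Complex.I_sq
  have hlog : Complex.log (I * Real.sign y) = Real.pi / 2 * Real.sign y * I := by
    rcases hy.lt_or_gt with hneg | hpos
    · simp [Real.sign_of_neg hneg, Complex.log_neg_I]
    · simp [Real.sign_of_pos hpos, Complex.log_I]
  have hsign : I * (Real.sign y : ℂ) ≠ 0 := by simp [Real.sign_eq_zero_iff, hy]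
  rw [Complex.cpow_def_of_ne_zero (by simp [hy]), hpolar,
    Complex.log_ofReal_mul (by positivity) hsign, hlog, Real.log_inv, saddleKernel,
    Real.rpow_def_of_pos (by positivity), Complex.ofReal_exp, ← Complex.exp_add]
  congr 1
  push_cast
  ring

lemma norm_one_div_sub_I_mul_cpow_le {s y : ℝ} (hs : 0 ≤ s) (hy : y ≠ 0) (ε : ℝ) :
    ‖(1 / (ε - I * y)) ^ (s : ℂ)‖ ≤ |y| ^ (-s) := by
  have him : |y| ≤ ‖(ε - I * y : ℂ)‖ := by simpa using Complex.abs_im_le_norm (ε - I * y : ℂ)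
  rw [Complex.norm_cpow_real, norm_div, norm_one, Real.rpow_neg (abs_nonneg y),
    ← Real.inv_rpow (abs_nonneg y), one_div]
  gcongr

lemma tendsto_one_div_sub_I_mul_cpow (s : ℝ) {y : ℝ} (hy : y ≠ 0) :
    Tendsto (fun ε : ℝ => (1 / (ε - I * y)) ^ (s : ℂ)) (𝓝 0) (𝓝 (saddleKernel s y)) := by
  have hne : ((0 : ℝ) - I * y : ℂ) ≠ 0 := by simp [hy]
  have hbase : ContinuousAt (fun ε : ℝ => 1 / (ε - I * y)) 0 := by
    fun_prop (disch := assumption)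
  have hslit : 1 / ((0 : ℝ) - I * y) ∈ Complex.slitPlane := .inr (by simp [hy])
  have hlim := hbase.cpow continuousAt_const hslit (g := fun _ => (s : ℂ))
  rw [ContinuousAt] at hlim
  rwa [Complex.ofReal_zero, zero_sub, one_div_neg_I_mul_cpow s hy] at hlim

lemma locallyIntegrable_mul_prod {X Y 𝕜 : Type*} [TopologicalSpace X] [MeasurableSpace X]
    [TopologicalSpace Y] [MeasurableSpace Y] [RCLike 𝕜] {μ : Measure X} {ν : Measure Y} [SFinite μ]
    [SFinite ν] {f : X → 𝕜} {g : Y → 𝕜} (hf : LocallyIntegrable f μ) (hg : LocallyIntegrable g ν) :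
    LocallyIntegrable (fun p : X × Y => f p.1 * g p.2) (μ.prod ν) := by
  rintro ⟨x, y⟩
  obtain ⟨U, hU, hfU⟩ := hf x
  obtain ⟨V, hV, hgV⟩ := hg y
  refine ⟨U ×ˢ V, prod_mem_nhds hU hV, ?_⟩
  rw [IntegrableOn, ← Measure.prod_restrict]
  exact hfU.integrable.mul_prod hgV.integrable

lemma locallyIntegrable_abs_mul_rpow_neg {s : ℝ} (hs1 : s < 1) :
    LocallyIntegrable fun p : ℝ × ℝ => |p.1 * p.2| ^ (-s) := by
  have habs : LocallyIntegrable fun x : ℝ => |x| ^ (-s) :=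
    locallyIntegrable_of_norm_le_rpow (C := 1) (α := s) (by simp) (by simpa using hs1)
      (.of_forall fun x => by rw [one_mul, Real.norm_of_nonneg (by positivity), Real.norm_eq_abs])
      (Measurable.aestronglyMeasurable (by fun_prop))
  simpa only [abs_mul, Real.mul_rpow (abs_nonneg _) (abs_nonneg _), Measure.volume_eq_prod] using
    locallyIntegrable_mul_prod habs habs

lemma ae_mul_ne_zero : ∀ᵐ p : ℝ × ℝ, p.1 * p.2 ≠ 0 := by
  filter_upwards [Measure.quasiMeasurePreserving_fst.ae (Measure.ae_ne volume (0 : ℝ)),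
    Measure.quasiMeasurePreserving_snd.ae (Measure.ae_ne volume (0 : ℝ))] with p hp1 hp2
  exact mul_ne_zero hp1 hp2

section MellinSaddleIntegral

variable {b : ℝ × ℝ → ℂ}

lemma integrable_abs_mul_rpow_neg_mul_norm {s : ℝ} (hs1 : s < 1) (hb : Continuous b)
    (hcb : HasCompactSupport b) :
    Integrable fun p : ℝ × ℝ => |p.1 * p.2| ^ (-s) * ‖b p‖ :=
  (locallyIntegrable_abs_mul_rpow_neg hs1).integrable_smul_right_of_hasCompactSupport hb.norm
    hcb.norm

lemma integrable_saddleKernel_mul {s : ℝ} (hs1 : s < 1) (hb : Continuous b)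
    (hcb : HasCompactSupport b) :
    Integrable fun p : ℝ × ℝ => saddleKernel s (p.1 * p.2) * b p := by
  have hmeas : Measurable fun p : ℝ × ℝ => saddleKernel s (p.1 * p.2) * b p :=
    ((measurable_saddleKernel s).comp (by fun_prop)).mul hb.measurable
  refine (integrable_abs_mul_rpow_neg_mul_norm hs1 hb hcb).mono' hmeas.aestronglyMeasurable
    (.of_forall fun p => ?_)
  rw [norm_mul, norm_saddleKernel]

lemma tendsto_integral_one_div_sub_I_mul_cpow_mul {s : ℝ} (hs : 0 ≤ s) (hs1 : s < 1)
    (hb : Continuous b) (hcb : HasCompactSupport b) :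
    Tendsto (fun ε : ℝ => ∫ p : ℝ × ℝ, (1 / (ε - I * (p.1 * p.2 : ℝ))) ^ (s : ℂ) * b p) (𝓝 0)
      (𝓝 (∫ p : ℝ × ℝ, saddleKernel s (p.1 * p.2) * b p)) := by
  have hbm := hb.measurable
  refine tendsto_integral_filter_of_dominated_convergence _
    (.of_forall fun ε => Measurable.aestronglyMeasurable (by fun_prop)) (.of_forall fun ε => ?_)
    (integrable_abs_mul_rpow_neg_mul_norm hs1 hb hcb) ?_
  · filter_upwards [ae_mul_ne_zero] with p hp
    rw [norm_mul]
    gcongr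
    exact norm_one_div_sub_I_mul_cpow_le hs hp ε
  · filter_upwards [ae_mul_ne_zero] with p hp
    exact (tendsto_one_div_sub_I_mul_cpow s hp).mul_const _

lemma exp_neg_mul_mul_exp_I_mul (ε μ x : ℝ) :
    Complex.exp (-(ε * μ : ℝ)) * Complex.exp (I * (μ * x : ℝ)) =
      Complex.exp (-((ε - I * x) * μ)) := by
  rw [← Complex.exp_add]
  congr 1
  push_cast
  ring

lemma integrable_cpow_mul_exp_neg_mul_mul (hb : Integrable b) {s : ℂ} {ε : ℝ} (hs : 0 < s.re)
    (hε : 0 < ε) :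
    Integrable (fun q : ℝ × ℝ × ℝ => (q.1 : ℂ) ^ (s - 1) *
      Complex.exp (-((ε - I * (q.2.1 * q.2.2 : ℝ)) * q.1)) * b q.2)
      ((volume.restrict (Ioi 0)).prod volume) := by
  have hdecay := mellinConvergent_exp_neg_mul (z := ε) hs (by simpa using hε)
  refine ((hdecay.integrable.mul_prod hb).bdd_mul (c := 1)
    (f := fun q : ℝ × ℝ × ℝ => Complex.exp (I * (q.1 * (q.2.1 * q.2.2) : ℝ))) (by fun_prop)
    (.of_forall fun q => (Complex.norm_exp_I_mul_ofReal _).le)).congr (.of_forall fun q => ?_)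
  simp only [← exp_neg_mul_mul_exp_I_mul, smul_eq_mul]
  push_cast
  ring

lemma mellin_exp_neg_mul_smul_saddleIntegral (hb : Integrable b) {s : ℂ} {ε : ℝ} (hs : 0 < s.re)
    (hε : 0 < ε) :
    mellin (fun μ => Complex.exp (-(ε * μ : ℝ)) • saddleIntegral b μ) s =
      Complex.Gamma s * ∫ p : ℝ × ℝ, (1 / (ε - I * (p.1 * p.2 : ℝ))) ^ s * b p := by
  calc mellin (fun μ => Complex.exp (-(ε * μ : ℝ)) • saddleIntegral b μ) s
      = ∫ μ in Ioi (0 : ℝ), ∫ p : ℝ × ℝ, (μ : ℂ) ^ (s - 1) *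
          Complex.exp (-((ε - I * (p.1 * p.2 : ℝ)) * μ)) * b p := by
        simp only [mellin, saddleIntegral, smul_eq_mul, ← integral_const_mul,
          ← exp_neg_mul_mul_exp_I_mul, mul_assoc]
    _ = ∫ p : ℝ × ℝ, ∫ μ in Ioi (0 : ℝ), (μ : ℂ) ^ (s - 1) *
          Complex.exp (-((ε - I * (p.1 * p.2 : ℝ)) * μ)) * b p :=
        integral_integral_swap (integrable_cpow_mul_exp_neg_mul_mul hb hs hε)
    _ = ∫ p : ℝ × ℝ, Complex.Gamma s * ((1 / (ε - I * (p.1 * p.2 : ℝ))) ^ s * b p) := by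
        congr with p
        have hgamma := mellin_exp_neg_mul (z := ε - I * (p.1 * p.2 : ℝ)) hs (by simpa using hε)
        simp only [mellin, smul_eq_mul] at hgamma
        rw [integral_mul_const, hgamma]
        ring
    _ = _ := integral_const_mul _ _

lemma mellinConvergent_saddleIntegral {s : ℝ} (hs : 0 < s) (hs1 : s < 1) (hb : ContDiff ℝ 1 b)
    (hcb : HasCompactSupport b) : MellinConvergent (saddleIntegral b) s := by
  obtain ⟨K, hK⟩ := exists_norm_saddleIntegral_le hb hcb
  have hmeas : Measurable (saddleIntegral b) :=
    measurable_saddleIntegral (hb.continuous.measurable.comp measurable_snd) measurable_id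
  refine mellinConvergent_of_norm_le hmeas.aestronglyMeasurable
    ((mellinConvergent_logDecay hs hs1).const_smul (K : ℂ)) fun μ hμ => (hK μ hμ.le).trans ?_
  rw [smul_eq_mul, ← Complex.ofReal_mul, Complex.norm_real]
  exact Real.le_norm_self _

theorem mellin_saddleIntegral {s : ℝ} (hs : 0 < s) (hs1 : s < 1) (hb : ContDiff ℝ 1 b)
    (hcb : HasCompactSupport b) :
    mellin (saddleIntegral b) s =
      Complex.Gamma s * ∫ p : ℝ × ℝ, saddleKernel s (p.1 * p.2) * b p := by
  have hbint : Integrable b := hb.continuous.integrable_of_hasCompactSupport hcb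
  refine tendsto_nhds_unique
    (tendsto_mellin_exp_neg_mul_smul (mellinConvergent_saddleIntegral hs hs1 hb hcb))
    (((tendsto_integral_one_div_sub_I_mul_cpow_mul hs.le hs1 hb.continuous hcb).mono_left
      nhdsWithin_le_nhds).const_mul (Complex.Gamma s) |>.congr' ?_)
  filter_upwards [self_mem_nhdsWithin] with ε (hε : 0 < ε)
  exact (mellin_exp_neg_mul_smul_saddleIntegral hbint (by simpa using hs) hε).symm

end MellinSaddleIntegral

section Remainder

variable {k m lam r : ℝ}

lemma mellinConvergent_comp_mul_rpow {F : ℝ → ℂ} (hk : 0 < k) (hlam : 0 < lam)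
    (hF : MellinConvergent F (m / k : ℝ)) : MellinConvergent (fun r => F (lam * r ^ k)) m := by
  have hscaled : MellinConvergent (fun μ => F (lam * μ)) (m / k : ℝ) :=
    (MellinConvergent.comp_mul_left hlam).2 hF
  rw [Complex.ofReal_div] at hscaled
  exact (MellinConvergent.comp_rpow hk.ne').2 hscaled

lemma mellinConvergent_logDecay_comp (hm : 0 < m) (hmk : m < k) (hlam : 0 < lam) :
    MellinConvergent (fun r => (logDecay (lam * r ^ k) : ℂ)) m := by
  have hk : 0 < k := hm.trans hmk
  exact mellinConvergent_comp_mul_rpow hk hlam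
    (mellinConvergent_logDecay (div_pos hm hk) ((div_lt_one hk).2 hmk))

lemma integrableOn_rpow_mul_logDecay_comp (hm : 0 < m) (hmk : m < k) (hlam : 0 < lam) :
    IntegrableOn (fun r => r ^ (m - 1) * logDecay (lam * r ^ k)) (Ioi 0) := by
  refine (mellinConvergent_logDecay_comp hm hmk hlam).norm.congr
    (ae_restrict_of_forall_mem measurableSet_Ioi fun r (hr : 0 < r) => ?_)
  have hdecay : 0 ≤ logDecay (lam * r ^ k) := logDecay_nonneg (by positivity)
  simp [Complex.norm_cpow_eq_rpow_re_of_pos hr, abs_of_nonneg hdecay]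

lemma one_add_log_one_add_le {μ : ℝ} (hlam : Real.exp 1 ≤ lam) (hμ : 0 ≤ μ) (hμlam : μ ≤ lam) :
    1 + Real.log (1 + μ) ≤ 3 * Real.log lam := by
  have h2lam : 2 ≤ lam := by linarith [Real.add_one_le_exp 1]
  have hlog : 1 ≤ Real.log lam := (Real.le_log_iff_exp_le (by linarith)).2 hlam
  have hsq : Real.log (1 + μ) ≤ Real.log (lam ^ 2) :=
    Real.log_le_log (by linarith) (by nlinarith)
  rw [Real.log_pow] at hsq
  push_cast at hsq
  linarith

lemma rpow_mul_logDecay_le_of_le_one (hm : 0 < m) (hmk : m + 1 ≤ k) (hlam : Real.exp 1 ≤ lam)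
    (hr : 0 < r) (hr1 : r ≤ 1) :
    r ^ m * logDecay (lam * r ^ k) ≤
      6 * Real.log lam * (1 + lam ^ ((m + 1) / k) * r)⁻¹ := by
  have hlam0 : 0 < lam := (Real.exp_pos 1).trans_le hlam
  have hk : 0 < k := by linarith
  set σ := (m + 1) / k
  have : 0 ≤ σ := by positivity
  have hσ1 : σ ≤ 1 := (div_le_one hk).2 hmk
  have hrk : r ^ k ≤ 1 := Real.rpow_le_one hr.le hr1 hk.le
  have hlog : 1 + Real.log (1 + lam * r ^ k) ≤ 3 * Real.log lam :=
    one_add_log_one_add_le hlam (by positivity) (mul_le_of_le_one_right hlam0.le hrk)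
  have hone : 1 ≤ 1 + Real.log (1 + lam * r ^ k) :=
    le_add_of_nonneg_right (Real.log_nonneg (le_add_of_nonneg_right (by positivity)))
  have hpow : lam ^ σ * r ^ (m + 1) ≤ 1 + lam * r ^ k := calc
    lam ^ σ * r ^ (m + 1) = (lam * r ^ k) ^ σ := by
      rw [Real.mul_rpow hlam0.le (by positivity), ← Real.rpow_mul hr.le, mul_div_cancel₀ _ hk.ne']
    _ ≤ (1 + lam * r ^ k) ^ σ := by gcongr; linarith
    _ ≤ 1 + lam * r ^ k :=
      Real.rpow_le_self_of_one_le (le_add_of_nonneg_right (by positivity)) hσ1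
  have hfrac : r ^ m / (1 + lam * r ^ k) ≤ 2 * (1 + lam ^ σ * r)⁻¹ := by
    rw [← div_eq_mul_inv, div_le_div_iff₀ (by positivity) (by positivity)]
    have hrm : r ^ m ≤ 1 := Real.rpow_le_one hr.le hr1 hm.le
    have hrk0 : 0 < lam * r ^ k := by positivity
    rw [Real.rpow_add_one hr.ne'] at hpow
    nlinarith
  calc r ^ m * logDecay (lam * r ^ k)
      = (1 + Real.log (1 + lam * r ^ k)) * (r ^ m / (1 + lam * r ^ k)) := by
        rw [logDecay]
        ring
    _ ≤ 3 * Real.log lam * (2 * (1 + lam ^ σ * r)⁻¹) :=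
        mul_le_mul hlog hfrac (by positivity) (zero_le_one.trans (hone.trans hlog))
    _ = 6 * Real.log lam * (1 + lam ^ σ * r)⁻¹ := by ring

lemma one_add_log_one_add_mul_rpow_le (hk : 0 ≤ k) (hlam : Real.exp 1 ≤ lam) (hr : 1 ≤ r) :
    1 + Real.log (1 + lam * r ^ k) ≤ (3 + 2 * k) * Real.log lam * r ^ (1 / 2 : ℝ) := by
  have hlam0 : 0 < lam := (Real.exp_pos 1).trans_le hlam
  have hr0 : 0 < r := by linarith
  have hrk : 1 ≤ r ^ k := Real.one_le_rpow hr hk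
  have hone : 1 ≤ r ^ (1 / 2 : ℝ) := Real.one_le_rpow hr (by norm_num)
  have hloglam : 1 ≤ Real.log lam := (Real.le_log_iff_exp_le hlam0).2 hlam
  have hlogr : Real.log r ≤ 2 * r ^ (1 / 2 : ℝ) := by
    linarith [Real.log_le_rpow_div hr0.le (by norm_num : (0 : ℝ) < 1 / 2)]
  calc 1 + Real.log (1 + lam * r ^ k)
      ≤ 1 + Real.log ((1 + lam) * r ^ k) := by gcongr; linarith
    _ = 1 + Real.log (1 + lam) + k * Real.log r := by
        rw [Real.log_mul (by positivity) (by positivity), Real.log_rpow hr0, add_assoc]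
    _ ≤ 3 * Real.log lam * r ^ (1 / 2 : ℝ) + k * (Real.log lam * (2 * r ^ (1 / 2 : ℝ))) := by
        gcongr
        · exact (one_add_log_one_add_le hlam hlam0.le le_rfl).trans
            (le_mul_of_one_le_right (by positivity) hone)
        · exact hlogr.trans (le_mul_of_one_le_left (by positivity) hloglam)
    _ = (3 + 2 * k) * Real.log lam * r ^ (1 / 2 : ℝ) := by ring

lemma rpow_mul_logDecay_le_of_one_le (hmk : m + 1 ≤ k) (hk : 0 ≤ k) (hlam : Real.exp 1 ≤ lam)
    (hr : 1 ≤ r) :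
    r ^ (m - 1) * logDecay (lam * r ^ k) ≤
      (3 + 2 * k) * Real.log lam * lam⁻¹ * r ^ (-(3 / 2) : ℝ) := by
  have hlam1 : 1 ≤ lam := by linarith [Real.add_one_le_exp 1]
  have hlog : 0 ≤ Real.log lam := Real.log_nonneg hlam1
  have hr0 : 0 < r := by linarith
  have hpow : r ^ (m - 1) * r ^ (1 / 2 : ℝ) / r ^ k ≤ r ^ (-(3 / 2) : ℝ) := by
    rw [← Real.rpow_add hr0, ← Real.rpow_sub hr0]
    exact Real.rpow_le_rpow_of_exponent_le hr (by linarith)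
  calc r ^ (m - 1) * logDecay (lam * r ^ k)
      ≤ r ^ (m - 1) * ((3 + 2 * k) * Real.log lam * r ^ (1 / 2 : ℝ) / (lam * r ^ k)) := by
        unfold logDecay
        gcongr
        · exact one_add_log_one_add_mul_rpow_le hk hlam hr
        · linarith
    _ = (3 + 2 * k) * Real.log lam * lam⁻¹ * (r ^ (m - 1) * r ^ (1 / 2 : ℝ) / r ^ k) := by
        field_simp
    _ ≤ (3 + 2 * k) * Real.log lam * lam⁻¹ * r ^ (-(3 / 2) : ℝ) := by gcongr

lemma integral_Ioc_rpow_mul_logDecay_le (hm : 0 < m) (hmk : m + 1 ≤ k)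
    (hlam : Real.exp 1 ≤ lam) :
    ∫ r in Ioc 0 1, r ^ m * logDecay (lam * r ^ k) ≤
      36 * lam ^ (-((m + 1) / k)) * Real.log lam ^ 2 := by
  have hlam1 : 1 ≤ lam := by linarith [Real.add_one_le_exp 1]
  have hlog : 0 ≤ Real.log lam := Real.log_nonneg hlam1
  set μ := lam ^ ((m + 1) / k) with hμ
  have hμ0 : 0 < μ := by positivity
  have hμlam : μ ≤ lam :=
    Real.rpow_le_self_of_one_le hlam1 ((div_le_one (by linarith)).2 hmk)
  have hint : IntegrableOn (fun r => 6 * Real.log lam * (1 + μ * r)⁻¹) (Ioc 0 1) := by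
    refine (ContinuousOn.integrableOn_Icc ?_).mono_set Ioc_subset_Icc_self
    have hne (r : ℝ) (hr : r ∈ Icc 0 1) : 1 + μ * r ≠ 0 :=
      (add_pos_of_pos_of_nonneg one_pos (mul_nonneg hμ0.le hr.1)).ne'
    fun_prop (disch := assumption)
  calc ∫ r in Ioc 0 1, r ^ m * logDecay (lam * r ^ k)
      ≤ ∫ r in Ioc 0 1, 6 * Real.log lam * (1 + μ * r)⁻¹ := by
        refine integral_mono_of_nonneg
          (ae_restrict_of_forall_mem measurableSet_Ioc fun r hr => ?_) hint
          (ae_restrict_of_forall_mem measurableSet_Ioc fun r hr =>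
            rpow_mul_logDecay_le_of_le_one hm hmk hlam hr.1 hr.2)
        have := hr.1
        exact mul_nonneg (by positivity) (logDecay_nonneg (by positivity))
    _ ≤ 6 * Real.log lam * (2 * 1 * logDecay μ) := by
        rw [integral_const_mul]
        gcongr
        exact integral_inv_one_add_mul_le_logDecay le_rfl hμ0.le
    _ ≤ 6 * Real.log lam * (2 * 1 * (3 * Real.log lam / μ)) := by
        unfold logDecay
        gcongr
        · exact one_add_log_one_add_le hlam hμ0.le hμlam
        · linarith
    _ = 36 * lam ^ (-((m + 1) / k)) * Real.log lam ^ 2 := by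
        rw [Real.rpow_neg (by positivity), ← hμ]
        ring

lemma integral_Ioi_one_rpow_mul_logDecay_le (hm : 0 < m) (hmk : m + 1 ≤ k)
    (hlam : Real.exp 1 ≤ lam) :
    ∫ r in Ioi 1, r ^ (m - 1) * logDecay (lam * r ^ k) ≤
      (6 + 4 * k) * lam ^ (-((m + 1) / k)) * Real.log lam ^ 2 := by
  have hk : 0 < k := by linarith
  have hlam1 : 1 ≤ lam := by linarith [Real.add_one_le_exp 1]
  have hlog : 1 ≤ Real.log lam := (Real.le_log_iff_exp_le (by linarith)).2 hlam
  have hinv : lam⁻¹ ≤ lam ^ (-((m + 1) / k)) := by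
    rw [← Real.rpow_neg_one]
    exact Real.rpow_le_rpow_of_exponent_le hlam1 (neg_le_neg ((div_le_one hk).2 hmk))
  calc ∫ r in Ioi 1, r ^ (m - 1) * logDecay (lam * r ^ k)
      ≤ ∫ r in Ioi 1, (3 + 2 * k) * Real.log lam * lam⁻¹ * r ^ (-(3 / 2) : ℝ) := by
        refine setIntegral_mono_on ?_ ?_ measurableSet_Ioi fun r (hr : 1 < r) =>
          rpow_mul_logDecay_le_of_one_le hmk hk.le hlam hr.le
        · exact (integrableOn_rpow_mul_logDecay_comp hm (by linarith) (by linarith)).mono_set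
            (Ioi_subset_Ioi zero_le_one)
        · exact (integrableOn_Ioi_rpow_of_lt (by norm_num) one_pos).const_mul _
    _ = (6 + 4 * k) * lam⁻¹ * Real.log lam := by
        rw [integral_const_mul, integral_Ioi_rpow_of_lt (by norm_num) one_pos, Real.one_rpow]
        ring
    _ ≤ (6 + 4 * k) * lam ^ (-((m + 1) / k)) * Real.log lam ^ 2 := by
        gcongr
        exact le_self_pow₀ hlog two_ne_zero

lemma integrableOn_rpow_mul_min_mul_logDecay (hm : 0 < m) (hmk : m < k) (hlam : 0 < lam) :
    IntegrableOn (fun r => r ^ (m - 1) * (min r 1 * logDecay (lam * r ^ k))) (Ioi 0) := by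
  simp only [mul_left_comm (_ ^ (m - 1))]
  refine (integrableOn_rpow_mul_logDecay_comp hm hmk hlam).bdd_mul (c := 1)
    (by fun_prop) (ae_restrict_of_forall_mem measurableSet_Ioi fun r (hr : 0 < r) => ?_)
  rw [Real.norm_of_nonneg (by positivity)]
  exact min_le_right r 1

lemma integral_rpow_mul_min_mul_logDecay_le (hm : 0 < m) (hmk : m + 1 ≤ k)
    (hlam : Real.exp 1 ≤ lam) :
    ∫ r in Ioi 0, r ^ (m - 1) * (min r 1 * logDecay (lam * r ^ k)) ≤
      (42 + 4 * k) * lam ^ (-((m + 1) / k)) * Real.log lam ^ 2 := by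
  have hint := integrableOn_rpow_mul_min_mul_logDecay hm (show m < k by linarith)
    ((Real.exp_pos 1).trans_le hlam)
  have hnear : ∫ r in Ioc 0 1, r ^ (m - 1) * (min r 1 * logDecay (lam * r ^ k)) =
      ∫ r in Ioc 0 1, r ^ m * logDecay (lam * r ^ k) := by
    refine setIntegral_congr_fun measurableSet_Ioc fun r hr => ?_
    simp only [min_eq_left hr.2]
    rw [← mul_assoc, ← Real.rpow_add_one hr.1.ne', sub_add_cancel]
  have htail : ∫ r in Ioi 1, r ^ (m - 1) * (min r 1 * logDecay (lam * r ^ k)) =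
      ∫ r in Ioi 1, r ^ (m - 1) * logDecay (lam * r ^ k) := by
    refine setIntegral_congr_fun measurableSet_Ioi fun r (hr : 1 < r) => ?_
    simp only [min_eq_right hr.le, one_mul]
  rw [← Ioc_union_Ioi_eq_Ioi zero_le_one,
    setIntegral_union (Ioc_disjoint_Ioi le_rfl) measurableSet_Ioi
      (hint.mono_set Ioc_subset_Ioi_self) (hint.mono_set (Ioi_subset_Ioi zero_le_one)),
    hnear, htail]
  linarith [integral_Ioc_rpow_mul_logDecay_le hm hmk hlam,
    integral_Ioi_one_rpow_mul_logDecay_le hm hmk hlam]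

lemma norm_mellin_le_of_norm_le_min_mul_logDecay {f : ℝ → ℂ} {K : ℝ} (hm : 0 < m)
    (hmk : m + 1 ≤ k) (hlam : Real.exp 1 ≤ lam) (hK : 0 ≤ K)
    (hf : ∀ r, 0 < r → ‖f r‖ ≤ K * (min r 1 * logDecay (lam * r ^ k))) :
    ‖mellin f m‖ ≤ K * (42 + 4 * k) * lam ^ (-((m + 1) / k)) * Real.log lam ^ 2 := by
  have hint := integrableOn_rpow_mul_min_mul_logDecay hm (show m < k by linarith)
    ((Real.exp_pos 1).trans_le hlam)
  have hnorm (r : ℝ) (hr : r ∈ Ioi 0) : ‖(r : ℂ) ^ ((m : ℂ) - 1) • f r‖ ≤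
      K * (r ^ (m - 1) * (min r 1 * logDecay (lam * r ^ k))) := by
    rw [norm_smul, Complex.norm_cpow_eq_rpow_re_of_pos hr, mul_left_comm]
    simp only [Complex.sub_re, Complex.ofReal_re, Complex.one_re]
    have : 0 ≤ r ^ (m - 1) := Real.rpow_nonneg hr.le _
    gcongr
    exact hf r hr
  calc ‖mellin f m‖
      ≤ ∫ r in Ioi 0, K * (r ^ (m - 1) * (min r 1 * logDecay (lam * r ^ k))) :=
        norm_integral_le_of_norm_le (hint.const_mul K)
          (ae_restrict_of_forall_mem measurableSet_Ioi hnorm)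
    _ ≤ K * ((42 + 4 * k) * lam ^ (-((m + 1) / k)) * Real.log lam ^ 2) := by
        rw [integral_const_mul]
        exact mul_le_mul_of_nonneg_left (integral_rpow_mul_min_mul_logDecay_le hm hmk hlam) hK
    _ = K * (42 + 4 * k) * lam ^ (-((m + 1) / k)) * Real.log lam ^ 2 := by ring

end Remainder

section Slices

/-- The restriction `(t, v) ↦ a (t, r, v)` of an amplitude on `ℝ³` to the plane at height `r`. -/
def slice (a : ℝ × ℝ × ℝ → ℂ) (r : ℝ) : ℝ × ℝ → ℂ := fun p => a (p.1, r, p.2)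

/-- The linear inclusion `(t, v) ↦ (t, 0, v)` parallel to the planes of constant height. -/
def sliceInclusion : ℝ × ℝ →L[ℝ] ℝ × ℝ × ℝ :=
  (ContinuousLinearMap.fst ℝ ℝ ℝ).prod
    ((0 : ℝ × ℝ →L[ℝ] ℝ).prod (ContinuousLinearMap.snd ℝ ℝ ℝ))

variable {a : ℝ × ℝ × ℝ → ℂ}

lemma contDiff_slice {n : WithTop ℕ∞} (ha : ContDiff ℝ n a) (r : ℝ) : ContDiff ℝ n (slice a r) :=
  ha.comp (contDiff_fst.prodMk (contDiff_const.prodMk contDiff_snd))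

lemma fderiv_slice (ha : Differentiable ℝ a) (r : ℝ) (p : ℝ × ℝ) :
    fderiv ℝ (slice a r) p = (fderiv ℝ a (p.1, r, p.2)).comp sliceInclusion := by
  have hincl : HasFDerivAt (fun q : ℝ × ℝ => (q.1, r, q.2)) sliceInclusion p :=
    hasFDerivAt_fst.prodMk ((hasFDerivAt_const r p).prodMk hasFDerivAt_snd)
  exact ((ha _).hasFDerivAt.comp p hincl).fderiv

lemma norm_sliceInclusion_le : ‖sliceInclusion‖ ≤ 1 := by
  refine ContinuousLinearMap.opNorm_le_bound _ zero_le_one fun p => ?_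
  simp [sliceInclusion, Prod.norm_def]

lemma support_slice_subset_closedBall {R : ℝ} (hR : tsupport a ⊆ Metric.closedBall 0 R) (r : ℝ) :
    Function.support (slice a r) ⊆ Metric.closedBall 0 R := by
  intro p hp
  have hmem := hR (subset_tsupport a hp)
  rw [mem_closedBall_zero_iff] at hmem ⊢
  exact (max_le_max_left _ (le_max_right _ _)).trans hmem

lemma hasCompactSupport_slice (hca : HasCompactSupport a) (r : ℝ) :
    HasCompactSupport (slice a r) := by
  obtain ⟨R, hR⟩ := hca.isCompact.isBounded.subset_closedBall 0
  exact .of_support_subset_isCompact (isCompact_closedBall 0 R)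
    (support_slice_subset_closedBall hR r)

lemma norm_sub_le_mul_min {E : Type*} [NormedAddCommGroup E] {f : ℝ × ℝ × ℝ → E} {L : NNReal}
    {M : ℝ} (hf : LipschitzWith L f) (hM : ∀ q, ‖f q‖ ≤ M) {r : ℝ} (hr : 0 ≤ r) (p : ℝ × ℝ) :
    ‖f (p.1, r, p.2) - f (p.1, 0, p.2)‖ ≤ (L + 2 * M) * min r 1 := by
  have hM0 : 0 ≤ M := (norm_nonneg _).trans (hM 0)
  have hlip : ‖f (p.1, r, p.2) - f (p.1, 0, p.2)‖ ≤ L * r := by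
    simpa [Prod.dist_eq, dist_eq_norm, abs_of_nonneg hr, hr]
      using hf.dist_le_mul (p.1, r, p.2) (p.1, 0, p.2)
  rcases le_total r 1 with hr1 | hr1
  · rw [min_eq_left hr1]
    exact hlip.trans (by gcongr; linarith)
  · rw [min_eq_right hr1, mul_one]
    linarith [norm_sub_le (f (p.1, r, p.2)) (f (p.1, 0, p.2)), hM (p.1, r, p.2),
      hM (p.1, 0, p.2), L.coe_nonneg]

lemma exists_norm_saddleIntegral_slice_sub_le (ha : ContDiff ℝ 2 a) (hca : HasCompactSupport a) :
    ∃ K, 0 ≤ K ∧ ∀ r μ, 0 ≤ r → 0 ≤ μ →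
      ‖saddleIntegral (slice a r) μ - saddleIntegral (slice a 0) μ‖ ≤
        K * (min r 1 * logDecay μ) := by
  have ha1 : ContDiff ℝ 1 a := ha.of_le one_le_two
  have ha' : ContDiff ℝ 1 (fderiv ℝ a) := ha.fderiv_right (by norm_num)
  have hca' := hca.fderiv ℝ
  have hslice (r : ℝ) : ContDiff ℝ 1 (slice a r) := contDiff_slice ha1 r
  have hint (r : ℝ) : Integrable (slice a r) :=
    (hslice r).continuous.integrable_of_hasCompactSupport (hasCompactSupport_slice hca r)
  obtain ⟨R, hR⟩ := hca.isCompact.isBounded.subset_closedBall 0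
  obtain ⟨M, hM⟩ := hca.exists_bound_of_continuous ha.continuous
  obtain ⟨M', hM'⟩ := hca'.exists_bound_of_continuous ha'.continuous
  obtain ⟨L, hL⟩ := ha1.lipschitzWith_of_hasCompactSupport hca one_ne_zero
  obtain ⟨L', hL'⟩ := ha'.lipschitzWith_of_hasCompactSupport hca' one_ne_zero
  set B := max (L + 2 * M) (L' + 2 * M')
  have hM0 : 0 ≤ M := (norm_nonneg _).trans (hM 0)
  have : 0 ≤ B := le_max_of_le_left (by positivity)
  refine ⟨16 * max R 1 ^ 2 * B, by positivity, fun r μ hr hμ => ?_⟩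
  rw [← saddleIntegral_sub (hint r) (hint 0), ← mul_assoc, mul_assoc (16 * _)]
  have : 0 ≤ min r 1 := le_min hr zero_le_one
  refine norm_saddleIntegral_le (le_max_right R 1) ((hslice r).sub (hslice 0)) ?_
    (fun p => ?_) (fun p => ?_) hμ
  · have hsupp := support_slice_subset_closedBall
      (hR.trans (Metric.closedBall_subset_closedBall (le_max_left R 1)))
    exact (Function.support_sub _ _).trans (union_subset (hsupp r) (hsupp 0))
  · exact (norm_sub_le_mul_min hL hM hr p).trans (by gcongr; exact le_max_left _ _)
  · have hdiff := ha1.differentiable one_ne_zero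
    rw [fderiv_sub ((hslice r).differentiable one_ne_zero p)
      ((hslice 0).differentiable one_ne_zero p), fderiv_slice hdiff, fderiv_slice hdiff,
      ← ContinuousLinearMap.sub_comp]
    calc _ ≤ _ * ‖sliceInclusion‖ := ContinuousLinearMap.opNorm_comp_le _ _
      _ ≤ _ := mul_le_of_le_one_right (norm_nonneg _) norm_sliceInclusion_le
      _ ≤ (L' + 2 * M') * min r 1 := norm_sub_le_mul_min hL' hM' hr p
      _ ≤ B * min r 1 := by gcongr; exact le_max_right _ _

end Slices

section Expansion

variable {k m lam : ℝ} {a : ℝ × ℝ × ℝ → ℂ}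

lemma mellin_comp_mul_rpow (F : ℝ → ℂ) (hk : 0 < k) (hlam : 0 < lam) :
    mellin (fun r => F (lam * r ^ k)) m =
      (lam ^ (-(m / k)) : ℝ) * ((k⁻¹ : ℝ) * mellin F (m / k : ℝ)) := by
  rw [mellin_comp_rpow (fun μ => F (lam * μ)), mellin_comp_mul_left F _ hlam, abs_of_pos hk,
    Complex.ofReal_cpow hlam.le, Complex.real_smul, smul_eq_mul, mul_left_comm]
  push_cast
  rfl

lemma mellin_saddleIntegral_comp_mul_rpow {b : ℝ × ℝ → ℂ} (hm : 0 < m) (hmk : m < k)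
    (hlam : 0 < lam) (hb : ContDiff ℝ 1 b) (hcb : HasCompactSupport b) :
    mellin (fun r => saddleIntegral b (lam * r ^ k)) m =
      (lam ^ (-(m / k)) : ℝ) * ((Real.Gamma (m / k) / k : ℝ) *
        ∫ t : ℝ, ∫ v : ℝ, saddleKernel (m / k) (t * v) * b (t, v)) := by
  have hk : 0 < k := hm.trans hmk
  have hs1 : m / k < 1 := (div_lt_one hk).2 hmk
  rw [mellin_comp_mul_rpow _ hk hlam, mellin_saddleIntegral (div_pos hm hk) hs1 hb hcb,
    Measure.volume_eq_prod, integral_prod _ (integrable_saddleKernel_mul hs1 hb.continuous hcb),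
    Complex.Gamma_ofReal]
  push_cast
  ring

lemma integral_eq_mellin_saddleIntegral_slice (ha : Continuous a) (hca : HasCompactSupport a) :
    (∫ r in Ioi (0 : ℝ), ∫ t : ℝ, ∫ v : ℝ,
        Complex.exp (I * (lam * t * r ^ k * v : ℝ)) * a (t, r, v) * (r ^ (m - 1) : ℝ)) =
      mellin (fun r => saddleIntegral (slice a r) (lam * r ^ k)) m := by
  refine setIntegral_congr_fun measurableSet_Ioi fun r (hr : 0 < r) => ?_
  have hint : Integrable (slice a r) :=
    (contDiff_zero.1 (contDiff_slice (contDiff_zero.2 ha) r)).integrable_of_hasCompactSupport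
      (hasCompactSupport_slice hca r)
  simp only [integral_mul_const, saddleIntegral_eq_integral_integral hint, slice, smul_eq_mul]
  rw [mul_comm, Complex.ofReal_cpow hr.le]
  push_cast
  simp only [mul_right_comm _ _ ((r : ℂ) ^ (k : ℂ)), Complex.ofReal_cpow hr.le]

lemma mellinConvergent_saddleIntegral_slice_sub (ha : ContDiff ℝ 2 a) (hca : HasCompactSupport a)
    (hm : 0 < m) (hmk : m < k) (hlam : 0 < lam) :
    MellinConvergent (fun r => saddleIntegral (slice a r) (lam * r ^ k) -
      saddleIntegral (slice a 0) (lam * r ^ k)) m := by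
  obtain ⟨K, hK, hbound⟩ := exists_norm_saddleIntegral_slice_sub_le ha hca
  have ham := ha.continuous.measurable
  refine mellinConvergent_of_norm_le ?_
    ((mellinConvergent_logDecay_comp hm hmk hlam).const_smul (K : ℂ)) fun r hr => ?_
  · refine Measurable.aestronglyMeasurable (.sub ?_ ?_)
    · exact measurable_saddleIntegral (f := fun q => slice a q.1 q.2)
        (ham.comp (by fun_prop)) (by fun_prop)
    · exact measurable_saddleIntegral (f := fun q : ℝ × ℝ × ℝ => slice a 0 q.2)
        (ham.comp (by fun_prop)) (by fun_prop)
  · have hdecay : 0 ≤ logDecay (lam * r ^ k) := logDecay_nonneg (by positivity)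
    refine (hbound r (lam * r ^ k) hr.le (by positivity)).trans ?_
    rw [norm_smul, Complex.norm_real, Complex.norm_real, Real.norm_of_nonneg hK,
      Real.norm_of_nonneg hdecay]
    gcongr
    exact mul_le_of_le_one_left hdecay (min_le_right r 1)

end Expansion

theorem stmt_0_general {k m : ℝ} (hm : 0 < m) (hmk : m + 1 ≤ k) {a : ℝ × ℝ × ℝ → ℂ}
    (ha : ContDiff ℝ 2 a) (hca : HasCompactSupport a) :
    ∃ C Λ : ℝ, ∀ lam : ℝ, Λ ≤ lam →
      ‖(∫ r in Ioi (0 : ℝ), ∫ t : ℝ, ∫ v : ℝ,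
            Complex.exp (I * (lam * t * r ^ k * v : ℝ)) * a (t, r, v) * (r ^ (m - 1) : ℝ))
        - (lam ^ (-(m / k)) : ℝ) * ((Real.Gamma (m / k) / k : ℝ) *
            ∫ t : ℝ, ∫ v : ℝ, (|t * v| ^ (-(m / k)) : ℝ) *
              Complex.exp (I * (Real.pi * (m / k / 2) * Real.sign (t * v) : ℝ)) * a (t, 0, v))‖
      ≤ C * lam ^ (-((m + 1) / k)) * Real.log lam ^ 2 := by
  obtain ⟨K, hK, hbound⟩ := exists_norm_saddleIntegral_slice_sub_le ha hca
  refine ⟨K * (42 + 4 * k), Real.exp 1, fun lam hlam => ?_⟩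
  have hlam0 : 0 < lam := (Real.exp_pos 1).trans_le hlam
  have hmk' : m < k := by linarith
  have hk : 0 < k := hm.trans hmk'
  have hb : ContDiff ℝ 1 (slice a 0) := contDiff_slice (ha.of_le one_le_two) 0
  have hcb : HasCompactSupport (slice a 0) := hasCompactSupport_slice hca 0
  have hsplit := hasMellin_add (mellinConvergent_saddleIntegral_slice_sub ha hca hm hmk' hlam0)
    (mellinConvergent_comp_mul_rpow hk hlam0
      (mellinConvergent_saddleIntegral (div_pos hm hk) ((div_lt_one hk).2 hmk') hb hcb))
  simp only [sub_add_cancel] at hsplit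
  have hcoeff := mellin_saddleIntegral_comp_mul_rpow hm hmk' hlam0 hb hcb
  simp only [saddleKernel, slice] at hcoeff
  rw [integral_eq_mellin_saddleIntegral_slice ha.continuous hca, hsplit.2, ← hcoeff,
    add_sub_cancel_right]
  exact norm_mellin_le_of_norm_le_min_mul_logDecay hm hmk hlam hK fun r hr =>
    hbound r (lam * r ^ k) hr.le (by positivity)

/-- For `k > 2n` and `a` smooth compactly supported on `ℝ³`,
`∫₀^∞ ∫_{ℝ²} e^{iλ t rᵏ v} a(t,r,v) r^{2n−1} dt dv dr
  = λ^{−2n/k} d(a) + O(λ^{−(2n+1)/k} (log λ)²)` as `λ → +∞`, with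
`d(a) = (Γ(2n/k)/k) ∫_{ℝ²} |tv|^{−2n/k} e^{iπ(n/k) sign(tv)} a(t,0,v) dt dv`. -/
theorem stmt_0 (k n : ℕ) (hk : 0 < k) (hn : 0 < n) (hkn : 2 * n < k)
    (a : ℝ × ℝ × ℝ → ℂ) (ha : ContDiff ℝ (⊤ : ℕ∞) a) (hca : HasCompactSupport a) :
    ∃ C Λ : ℝ, ∀ lam : ℝ, Λ ≤ lam →
      ‖(∫ r in Set.Ioi (0:ℝ), ∫ t : ℝ, ∫ v : ℝ,
            Complex.exp (Complex.I * ((lam * t * r ^ k * v : ℝ) : ℂ)) * a (t, r, v)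
              * (r : ℂ) ^ (2 * n - 1))
        - ((lam ^ (-((2 * n : ℝ) / (k : ℝ))) : ℝ) : ℂ) *
            (((Real.Gamma ((2 * n : ℝ) / (k : ℝ)) / (k : ℝ) : ℝ) : ℂ) *
              ∫ t : ℝ, ∫ v : ℝ,
                ((|t * v| ^ (-((2 * n : ℝ) / (k : ℝ))) : ℝ) : ℂ) *
                  Complex.exp (Complex.I *
                    ((Real.pi * ((n : ℝ) / (k : ℝ)) * Real.sign (t * v) : ℝ) : ℂ)) *
                  a (t, 0, v))‖
      ≤ C * lam ^ (-((2 * (n : ℝ) + 1) / (k : ℝ))) * (Real.log lam) ^ 2 := by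
  have hkn' : 2 * (n : ℝ) + 1 ≤ k := mod_cast hkn
  obtain ⟨C, Λ, hbound⟩ := stmt_0_general (by positivity) hkn' (contDiff_infty.1 ha 2) hca
  have hweight : 2 * (n : ℝ) - 1 = (2 * n - 1 : ℕ) := by
    rw [Nat.cast_sub (by lia)]
    push_cast
    rfl
  have hphase : 2 * (n : ℝ) / k / 2 = n / k := by ring
  refine ⟨C, Λ, fun lam hlam => ?_⟩
  simpa only [hweight, hphase, Real.rpow_natCast, Complex.ofReal_pow] using hbound lam hlam
end

section
/- Let k ≥ 1 be an integer, let a : ℝ³ → ℂ be smooth and compactly supported, let λ > 0 and let 0 < c < 1/k. For a complex number z with 0 < Re z < 1/k define M(z) = ∫₀^∞ ∫_{{(t,v) ∈ ℝ² : t v > 0}} (t v rᵏ)^{−z} a(t,r,v) dt dv dr (an absolutely convergent integral). Then ∫₀^∞ ∫_{{(t,v) ∈ ℝ² : t v > 0}} e^{iλ t v rᵏ} a(t,r,v) dt dv dr = (1/2π) ∫_ℝ e^{iπ(c+is)/2} Γ(c+is) λ^{−(c+is)} M(c+is) ds, where the right-hand integral over s ∈ ℝ converges absolutely. -/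
open MeasureTheory

/-!
Rotating the exponential to `exp (-e^{-iθ} x)` with `|θ| < π / 2` makes its Mellin transform
`e^{iθz} Γ(z)` decay exponentially on vertical lines, so Mellin inversion applies, and integrating
it against the amplitude with Fubini gives the formula at angle `θ`. The oscillatory integral is the
limit `θ → π / 2`. There `e^{iθz} Γ(z)` only satisfies the bound `O((1 + |s|)^c)`, uniformly in `θ`,
while two integrations by parts in `v` give `M(c + is) = O(|s|^{-2})`; as `c < 1`, the product
is dominated by an integrable function.
-/

/-! ### The rotated exponential and its Mellin transform -/

section

open Complex Set Filter Topology

open scoped Real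

theorem norm_cpow_sub_one_smul_cexp_neg_mul {t : ℝ} (ht : 0 < t) (z w : ℂ) :
    ‖(t : ℂ) ^ (z - 1) • cexp (-(w * t))‖ = t ^ (z.re - 1) * Real.exp (-(w.re * t)) := by
  rw [norm_smul, norm_cpow_eq_rpow_re_of_pos ht, norm_exp]
  simp

theorem integrableOn_rpow_sub_one_mul_exp_neg_mul {σ b : ℝ} (hσ : 0 < σ) (hb : 0 < b) :
    IntegrableOn (fun t : ℝ ↦ t ^ (σ - 1) * Real.exp (-(b * t))) (Ioi 0) := by
  simpa using integrableOn_rpow_mul_exp_neg_mul_rpow (s := σ - 1) (by linarith) one_pos hb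

theorem mellinConvergent_cexp_neg_mul {z w : ℂ} (hz : 0 < z.re) (hw : 0 < w.re) :
    MellinConvergent (fun t : ℝ ↦ cexp (-(w * t))) z := by
  refine (integrableOn_rpow_sub_one_mul_exp_neg_mul hz hw).mono'
    (Measurable.aestronglyMeasurable (by fun_prop)) ?_
  exact (ae_restrict_mem measurableSet_Ioi).mono fun t ht ↦
    (norm_cpow_sub_one_smul_cexp_neg_mul ht z w).le

theorem differentiableAt_mellin_cexp_neg_mul {z w : ℂ} (hz : 0 < z.re) (hw : 0 < w.re) :
    DifferentiableAt ℂ (fun w : ℂ ↦ mellin (fun t : ℝ ↦ cexp (-(w * t))) z) w := by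
  have half_lt_re_mem_nhds : {u : ℂ | w.re / 2 < u.re} ∈ 𝓝 w :=
    (isOpen_lt continuous_const continuous_re).mem_nhds (half_lt_self hw)
  refine (hasDerivAt_integral_of_dominated_loc_of_deriv_le
    (μ := volume.restrict (Ioi 0)) (F := fun (u : ℂ) (t : ℝ) ↦ (t : ℂ) ^ (z - 1) • cexp (-(u * t)))
    (F' := fun u t ↦ (t : ℂ) ^ (z - 1) • (cexp (-(u * t)) * -t))
    (bound := fun t ↦ t ^ ((z.re + 1) - 1) * Real.exp (-(w.re / 2 * t)))
    half_lt_re_mem_nhds (.of_forall fun u ↦ Measurable.aestronglyMeasurable (by fun_prop))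
    (mellinConvergent_cexp_neg_mul hz hw) (Measurable.aestronglyMeasurable (by fun_prop)) ?_
    (integrableOn_rpow_sub_one_mul_exp_neg_mul (by linarith) (by linarith))
    (.of_forall fun t u _ ↦ ?_)).2.differentiableAt
  · refine (ae_restrict_mem measurableSet_Ioi).mono fun t (ht : 0 < t) u (hu : _ < u.re) ↦ ?_
    calc ‖(t : ℂ) ^ (z - 1) • (cexp (-(u * t)) * -t)‖
        = t ^ (z.re - 1) * Real.exp (-(u.re * t)) * t := by
          rw [← smul_mul_assoc, norm_mul, norm_cpow_sub_one_smul_cexp_neg_mul ht, norm_neg,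
            norm_real, Real.norm_of_nonneg ht.le]
      _ ≤ t ^ (z.re - 1) * Real.exp (-(w.re / 2 * t)) * t := by gcongr
      _ = t ^ (z.re + 1 - 1) * Real.exp (-(w.re / 2 * t)) := by
          rw [add_sub_right_comm, Real.rpow_add_one ht.ne']
          ring
  · have hasDerivAt_neg_mul : HasDerivAt (fun u : ℂ ↦ -(u * t)) (-t : ℂ) u := by
      simpa only [one_mul] using ((hasDerivAt_id' u).mul_const (t : ℂ)).fun_neg
    exact hasDerivAt_neg_mul.cexp.const_mul _

/-- Both sides are holomorphic in `w` on the right half-plane and agree on the positive reals. -/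
theorem mellin_cexp_neg_mul {z w : ℂ} (hz : 0 < z.re) (hw : 0 < w.re) :
    mellin (fun t : ℝ ↦ cexp (-(w * t))) z = (1 / w) ^ z * Gamma z := by
  let rightHalfPlane : Set ℂ := {w | 0 < w.re}
  have isOpen_rightHalfPlane : IsOpen rightHalfPlane := isOpen_lt continuous_const continuous_re
  have analytic_mellin : AnalyticOnNhd ℂ
      (fun w : ℂ ↦ mellin (fun t : ℝ ↦ cexp (-(w * t))) z) rightHalfPlane :=
    DifferentiableOn.analyticOnNhd (fun w hw ↦
      (differentiableAt_mellin_cexp_neg_mul hz hw).differentiableWithinAt) isOpen_rightHalfPlane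
  have analytic_cpow : AnalyticOnNhd ℂ (fun w : ℂ ↦ (1 / w) ^ z * Gamma z) rightHalfPlane := by
    refine DifferentiableOn.analyticOnNhd (fun w (hw : 0 < w.re) ↦ ?_) isOpen_rightHalfPlane
    have hw0 : w ≠ 0 := by rintro rfl; simp at hw
    have one_div_mem_slitPlane : 1 / w ∈ slitPlane := by
      rw [one_div, mem_slitPlane_iff, inv_re]
      exact .inl (div_pos hw (normSq_pos.2 hw0))
    exact ((((differentiableAt_const _).div differentiableAt_id hw0).cpow_const
      one_div_mem_slitPlane).mul_const _).differentiableWithinAt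
  have tendsto_ofReal : Tendsto ((↑) : ℝ → ℂ) (𝓝[≠] 1) (𝓝[≠] 1) := by
    have := (ofRealCLM.hasDerivAt (x := 1)).tendsto_nhdsNE (by simp)
    rwa [ofRealCLM_apply, ofReal_one] at this
  have eventually_eq : ∀ᶠ x : ℝ in 𝓝[≠] 1,
      mellin (fun t : ℝ ↦ cexp (-(x * t))) z = (1 / x : ℂ) ^ z * Gamma z := by
    filter_upwards [mem_nhdsWithin_of_mem_nhds (Ioi_mem_nhds one_pos)] with x hx
    exact integral_cpow_mul_exp_neg_mul_Ioi hz hx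
  exact analytic_mellin.eqOn_of_preconnected_of_frequently_eq analytic_cpow
    (convex_halfSpace_re_gt 0).isPreconnected (by simp [rightHalfPlane])
    (tendsto_ofReal.frequently eventually_eq.frequently) hw

/-- The exponential `e^{-x}` with its argument rotated: `rotExp θ x = exp (-e^{-iθ} x)`, which
interpolates between `e^{-x}` at `θ = 0` and the oscillating `e^{ix}` at `θ = π / 2`. -/
noncomputable def rotExp (θ x : ℝ) : ℂ :=
  cexp (-(cexp (-(θ * I)) * x))

/-- The weight `e^{iθz} Γ(z)`, the Mellin transform of `rotExp θ` for `|θ| < π / 2`. -/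
noncomputable def rotGamma (θ : ℝ) (z : ℂ) : ℂ :=
  cexp (θ * I * z) * Gamma z

theorem cexp_neg_mul_I_re (θ : ℝ) : (cexp (-(θ * I))).re = Real.cos θ := by
  rw [← neg_mul, ← ofReal_neg, exp_ofReal_mul_I_re, Real.cos_neg]

theorem norm_rotExp (θ x : ℝ) : ‖rotExp θ x‖ = Real.exp (-(Real.cos θ * x)) := by
  rw [rotExp, norm_exp, neg_re, re_mul_ofReal, cexp_neg_mul_I_re]

theorem rotExp_pi_div_two (x : ℝ) : rotExp (π / 2) x = cexp (I * x) := by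
  rw [rotExp, ← neg_mul, ofReal_div, ofReal_ofNat, ← neg_mul, ← neg_div, exp_neg_pi_div_two_mul_I,
    neg_neg]

theorem rotGamma_pi_div_two (z : ℂ) : rotGamma (π / 2) z = cexp (I * π * z / 2) * Gamma z := by
  rw [rotGamma, ofReal_div, ofReal_ofNat]
  ring_nf

@[fun_prop]
theorem continuous_rotExp : Continuous fun p : ℝ × ℝ ↦ rotExp p.1 p.2 := by
  unfold rotExp
  fun_prop

theorem norm_rotGamma (θ : ℝ) (z : ℂ) :
    ‖rotGamma θ z‖ = Real.exp (-(θ * z.im)) * ‖Gamma z‖ := by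
  rw [rotGamma, norm_mul, norm_exp]
  simp

theorem cos_pos_of_abs_lt_pi_div_two {θ : ℝ} (hθ : |θ| < π / 2) : 0 < Real.cos θ :=
  Real.cos_pos_of_mem_Ioo (abs_lt.1 hθ)

theorem mellinConvergent_rotExp {θ : ℝ} {z : ℂ} (hθ : |θ| < π / 2) (hz : 0 < z.re) :
    MellinConvergent (rotExp θ) z :=
  mellinConvergent_cexp_neg_mul hz
    ((cexp_neg_mul_I_re θ).symm ▸ cos_pos_of_abs_lt_pi_div_two hθ)

theorem mellin_rotExp {θ : ℝ} {z : ℂ} (hθ : |θ| < π / 2) (hz : 0 < z.re) :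
    mellin (rotExp θ) z = rotGamma θ z := by
  have hre : 0 < (cexp (-(θ * I))).re :=
    (cexp_neg_mul_I_re θ).symm ▸ cos_pos_of_abs_lt_pi_div_two hθ
  obtain ⟨hθ_lower, hθ_upper⟩ := abs_lt.1 hθ
  refine (mellin_cexp_neg_mul hz hre).trans ?_
  rw [one_div, ← exp_neg, neg_neg, cpow_def_of_ne_zero (exp_ne_zero _), log_exp, rotGamma]
  · rw [im_ofReal_mul, I_im, mul_one]; linarith [Real.pi_pos]
  · rw [im_ofReal_mul, I_im, mul_one]; linarith [Real.pi_pos]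

theorem norm_rotGamma_le {θ : ℝ} {z : ℂ} (hθ : |θ| < π / 2) (hz : 0 < z.re) :
    ‖rotGamma θ z‖ ≤ (1 / Real.cos θ) ^ z.re * Real.Gamma z.re := by
  rw [← mellin_rotExp hθ hz,
    ← Real.integral_rpow_mul_exp_neg_mul_Ioi hz (cos_pos_of_abs_lt_pi_div_two hθ)]
  refine (norm_integral_le_integral_norm _).trans_eq
    (setIntegral_congr_fun measurableSet_Ioi fun t ht ↦ ?_)
  simp only [norm_smul, norm_cpow_eq_rpow_re_of_pos ht, norm_rotExp, sub_re, one_re]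

theorem exp_mul_abs_im_mul_norm_Gamma_le {θ : ℝ} {z : ℂ} (hθ : |θ| < π / 2) (hz : 0 < z.re) :
    Real.exp (θ * |z.im|) * ‖Gamma z‖ ≤ (1 / Real.cos θ) ^ z.re * Real.Gamma z.re := by
  rcases abs_cases z.im with ⟨him, -⟩ | ⟨him, -⟩
  · simpa [norm_rotGamma, him] using norm_rotGamma_le ((abs_neg θ).trans_lt hθ) hz
  · simpa [norm_rotGamma, him] using norm_rotGamma_le hθ hz

/-- Optimising the angle in `exp_mul_abs_im_mul_norm_Gamma_le`: the choice
`θ = π / 2 - 1 / (1 + |Im z|)` loses only a factor `e` in the exponential, while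
`1 / cos θ ≤ 2 (1 + |Im z|)`. -/
theorem exp_pi_div_two_mul_abs_im_mul_norm_Gamma_le {z : ℂ} (hz : 0 < z.re) :
    Real.exp (π / 2 * |z.im|) * ‖Gamma z‖ ≤
      Real.exp 1 * (2 * (1 + |z.im|)) ^ z.re * Real.Gamma z.re := by
  set S := 1 + |z.im|
  have one_le_S : 1 ≤ S := le_add_of_nonneg_right (abs_nonneg _)
  have S_pos : 0 < S := by positivity
  have inv_S_pos : 0 < 1 / S := by positivity
  have inv_S_le_one : 1 / S ≤ 1 := (div_le_one S_pos).2 one_le_S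
  have abs_angle_lt : |π / 2 - 1 / S| < π / 2 := by
    rw [abs_lt]
    constructor <;> linarith [Real.pi_gt_three]
  have le_cos_angle : 1 / (2 * S) ≤ Real.cos (π / 2 - 1 / S) := by
    rw [Real.cos_pi_div_two_sub]
    calc 1 / (2 * S) = 2 / 4 * (1 / S) := by field_simp; norm_num
      _ ≤ 2 / π * (1 / S) := by gcongr; exact Real.pi_le_four
      _ ≤ Real.sin (1 / S) := Real.mul_le_sin inv_S_pos.le (by linarith [Real.pi_gt_three])
  have one_div_cos_angle_le : 1 / Real.cos (π / 2 - 1 / S) ≤ 2 * S :=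
    (one_div_le (by positivity) (cos_pos_of_abs_lt_pi_div_two abs_angle_lt)).1 le_cos_angle
  have cos_angle_pos := cos_pos_of_abs_lt_pi_div_two abs_angle_lt
  have exp_le : Real.exp (π / 2 * |z.im|) ≤
      Real.exp 1 * Real.exp ((π / 2 - 1 / S) * |z.im|) := by
    rw [← Real.exp_add, Real.exp_le_exp]
    have : 1 / S * |z.im| ≤ 1 := by
      rw [one_div_mul_eq_div, div_le_one S_pos]
      linarith
    linarith
  calc Real.exp (π / 2 * |z.im|) * ‖Gamma z‖
      ≤ Real.exp 1 * (Real.exp ((π / 2 - 1 / S) * |z.im|) * ‖Gamma z‖) := by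
        rw [← mul_assoc]
        gcongr
    _ ≤ Real.exp 1 * ((1 / Real.cos (π / 2 - 1 / S)) ^ z.re * Real.Gamma z.re) :=
        mul_le_mul_of_nonneg_left (exp_mul_abs_im_mul_norm_Gamma_le abs_angle_lt hz)
          (Real.exp_pos _).le
    _ ≤ Real.exp 1 * ((2 * S) ^ z.re * Real.Gamma z.re) := by
        have := Real.Gamma_pos_of_pos hz
        gcongr
    _ = Real.exp 1 * (2 * S) ^ z.re * Real.Gamma z.re := by rw [mul_assoc]

theorem exists_norm_rotGamma_le {c : ℝ} (hc : 0 < c) :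
    ∃ K, ∀ θ : ℝ, |θ| ≤ π / 2 → ∀ s : ℝ, ‖rotGamma θ (c + s * I)‖ ≤ K * (1 + |s|) ^ c := by
  refine ⟨Real.exp 1 * 2 ^ c * Real.Gamma c, fun θ hθ s ↦ ?_⟩
  have hre : (c + s * I).re = c := by simp
  have him : (c + s * I).im = s := by simp
  have neg_mul_le : -(θ * s) ≤ π / 2 * |s| := by
    calc -(θ * s) ≤ |θ * s| := neg_le_abs _
      _ = |θ| * |s| := abs_mul θ s
      _ ≤ π / 2 * |s| := by gcongr
  calc ‖rotGamma θ (c + s * I)‖ ≤ Real.exp (π / 2 * |s|) * ‖Gamma (c + s * I)‖ := by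
        rw [norm_rotGamma, him]
        gcongr
    _ ≤ Real.exp 1 * (2 * (1 + |s|)) ^ c * Real.Gamma c := by
        simpa [hre, him] using
          exp_pi_div_two_mul_abs_im_mul_norm_Gamma_le (z := c + s * I) (hre.symm ▸ hc)
    _ = Real.exp 1 * 2 ^ c * Real.Gamma c * (1 + |s|) ^ c := by
        rw [Real.mul_rpow two_pos.le (by positivity)]
        ring

theorem continuous_rotGamma_vertical {c : ℝ} (hc : 0 < c) (θ : ℝ) :
    Continuous fun s : ℝ ↦ rotGamma θ (c + s * I) := by
  have continuous_Gamma : Continuous fun s : ℝ ↦ Gamma (c + s * I) := by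
    refine continuous_iff_continuousAt.2 fun s ↦ ?_
    have : ∀ m : ℕ, (c + s * I : ℂ) ≠ -m := fun m h ↦ by
      have := congrArg re h
      simp at this
      linarith [m.cast_nonneg (α := ℝ)]
    exact (differentiableAt_Gamma _ this).continuousAt.comp (f := fun s : ℝ ↦ (c + s * I : ℂ))
      (by fun_prop)
  unfold rotGamma
  fun_prop

theorem integrable_exp_neg_mul_abs {d : ℝ} (hd : 0 < d) :
    Integrable fun s : ℝ ↦ Real.exp (-d * |s|) := by
  have := (integrable_fun_norm_addHaar (E := ℝ) volume (f := fun x : ℝ ↦ Real.exp (-d * x))).2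
    (by simpa using exp_neg_integrableOn_Ioi 0 hd)
  simpa using this

/-- Rotating to an angle strictly between `|θ|` and `π / 2` gains the exponential decay
of `exp_mul_abs_im_mul_norm_Gamma_le`. -/
theorem verticalIntegrable_rotGamma {c θ : ℝ} (hc : 0 < c) (hθ : |θ| < π / 2) :
    VerticalIntegrable (rotGamma θ) c := by
  obtain ⟨φ, hθφ, hφ⟩ := exists_between hθ
  have abs_φ_lt : |φ| < π / 2 := by rwa [abs_of_pos ((abs_nonneg θ).trans_lt hθφ)]
  refine ((integrable_exp_neg_mul_abs (sub_pos.2 hθφ)).const_mul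
    ((1 / Real.cos φ) ^ c * Real.Gamma c)).mono'
    (continuous_rotGamma_vertical hc θ).aestronglyMeasurable (.of_forall fun s ↦ ?_)
  have hre : (c + s * I).re = c := by simp
  have him : (c + s * I).im = s := by simp
  have exp_mul_norm_Gamma_le : Real.exp (φ * |s|) * ‖Gamma (c + s * I)‖ ≤
      (1 / Real.cos φ) ^ c * Real.Gamma c := by
    simpa only [hre, him] using
      exp_mul_abs_im_mul_norm_Gamma_le (z := c + s * I) abs_φ_lt (hre.symm ▸ hc)
  have neg_mul_le : -(θ * s) ≤ φ * |s| + -(φ - |θ|) * |s| := by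
    linarith [neg_le_abs (θ * s), abs_mul θ s]
  calc ‖rotGamma θ (c + s * I)‖
      ≤ Real.exp (φ * |s| + -(φ - |θ|) * |s|) * ‖Gamma (c + s * I)‖ := by
        rw [norm_rotGamma, him]
        gcongr
    _ = Real.exp (φ * |s|) * ‖Gamma (c + s * I)‖ * Real.exp (-(φ - |θ|) * |s|) := by
        rw [Real.exp_add]
        ring
    _ ≤ (1 / Real.cos φ) ^ c * Real.Gamma c * Real.exp (-(φ - |θ|) * |s|) :=
        mul_le_mul_of_nonneg_right exp_mul_norm_Gamma_le (Real.exp_pos _).le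

theorem rotExp_eq_integral_vertical {c θ x : ℝ} (hc : 0 < c) (hθ : |θ| < π / 2) (hx : 0 < x) :
    rotExp θ x = 1 / (2 * π) * ∫ s : ℝ, (x : ℂ) ^ (-(c + s * I)) * rotGamma θ (c + s * I) := by
  have mellin_eq : ∀ s : ℝ, mellin (rotExp θ) (c + s * I) = rotGamma θ (c + s * I) :=
    fun s ↦ mellin_rotExp hθ (by simpa)
  have vertical : VerticalIntegrable (mellin (rotExp θ)) c := by
    simpa only [VerticalIntegrable, mellin_eq] using verticalIntegrable_rotGamma hc hθ
  rw [← mellinInv_mellin_eq c (rotExp θ) hx (mellinConvergent_rotExp hθ (by simpa)) vertical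
    (Continuous.continuousAt (by fun_prop))]
  simp [mellinInv, mellin_eq]

end

/-! ### Complex moments and the Abel limit -/

section

open Complex Set Filter Topology

open scoped Real

variable {Ω : Type*} [MeasurableSpace Ω] {μ : Measure Ω} {X : Ω → ℝ} {A : Ω → ℂ}

/-- The complex moment `∫ X^{-z} A dμ` of a phase function `X` against an amplitude `A`; it is the
function `M(z)` of the Mellin–Barnes representation when `X(t, r, v) = t v rᵏ`. -/
noncomputable def complexMoment (μ : Measure Ω) (X : Ω → ℝ) (A : Ω → ℂ) (z : ℂ) : ℂ :=
  ∫ ω, (X ω : ℂ) ^ (-z) * A ω ∂μ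

theorem norm_ofReal_cpow_neg_eq_of_re_eq {x : ℝ} (hx : 0 < x) {z w : ℂ} (hzw : z.re = w.re) :
    ‖(x : ℂ) ^ (-z)‖ = ‖(x : ℂ) ^ (-w)‖ := by
  simp only [norm_cpow_eq_rpow_re_of_pos hx, neg_re, hzw]

theorem complexMoment_const_mul {a : ℝ} (ha : 0 ≤ a) (hX : ∀ᵐ ω ∂μ, 0 < X ω) (z : ℂ) :
    complexMoment μ (fun ω ↦ a * X ω) A z = (a : ℂ) ^ (-z) * complexMoment μ X A z := by
  rw [complexMoment, complexMoment, ← integral_const_mul]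
  refine integral_congr_ae (hX.mono fun ω hω ↦ ?_)
  simp only [ofReal_mul, mul_cpow_ofReal_nonneg ha hω.le, mul_assoc]

theorem integrable_rotGamma_mul_of_integrable {c θ : ℝ} {N : ℝ → ℂ} (hc : 0 < c)
    (hθ : |θ| ≤ π / 2) (hN : AEStronglyMeasurable N)
    (hN_growth : Integrable fun s : ℝ ↦ (1 + |s|) ^ c * ‖N s‖) :
    Integrable fun s : ℝ ↦ rotGamma θ (c + s * I) * N s := by
  obtain ⟨K, hK⟩ := exists_norm_rotGamma_le hc
  refine (hN_growth.const_mul K).mono'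
    ((continuous_rotGamma_vertical hc θ).aestronglyMeasurable.mul hN) (.of_forall fun s ↦ ?_)
  rw [norm_mul, ← mul_assoc]
  gcongr
  exact hK θ hθ s

theorem eventually_abs_lt_pi_div_two : ∀ᶠ θ in 𝓝[<] (π / 2), |θ| < π / 2 :=
  mem_of_superset (Ioo_mem_nhdsLT (neg_lt_self Real.pi_div_two_pos)) fun _ ↦ abs_lt.2

theorem tendsto_integral_rotGamma_mul {c : ℝ} {N : ℝ → ℂ} (hc : 0 < c)
    (hN : AEStronglyMeasurable N)
    (hN_growth : Integrable fun s : ℝ ↦ (1 + |s|) ^ c * ‖N s‖) :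
    Tendsto (fun θ ↦ ∫ s : ℝ, rotGamma θ (c + s * I) * N s) (𝓝[<] (π / 2))
      (𝓝 (∫ s : ℝ, rotGamma (π / 2) (c + s * I) * N s)) := by
  obtain ⟨K, hK⟩ := exists_norm_rotGamma_le hc
  refine tendsto_integral_filter_of_dominated_convergence (fun s ↦ K * ((1 + |s|) ^ c * ‖N s‖))
    (.of_forall fun θ ↦ (continuous_rotGamma_vertical hc θ).aestronglyMeasurable.mul hN) ?_
    (hN_growth.const_mul K) (.of_forall fun s ↦ ?_)
  · filter_upwards [eventually_abs_lt_pi_div_two] with θ hθ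
    refine .of_forall fun s ↦ ?_
    rw [norm_mul, ← mul_assoc]
    gcongr
    exact hK θ hθ.le s
  · have : Continuous fun θ : ℝ ↦ rotGamma θ (c + s * I) * N s := by
      unfold rotGamma
      fun_prop
    exact (this.tendsto _).mono_left nhdsWithin_le_nhds

theorem tendsto_integral_rotExp_mul (hX : Measurable X) (hX_pos : ∀ᵐ ω ∂μ, 0 < X ω)
    (hA : Integrable A μ) :
    Tendsto (fun θ ↦ ∫ ω, rotExp θ (X ω) * A ω ∂μ) (𝓝[<] (π / 2))
      (𝓝 (∫ ω, cexp (I * X ω) * A ω ∂μ)) := by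
  simp only [← rotExp_pi_div_two]
  refine tendsto_integral_filter_of_dominated_convergence (fun ω ↦ ‖A ω‖)
    (.of_forall fun θ ↦ ?_) ?_ hA.norm (.of_forall fun ω ↦ ?_)
  · have : Continuous (rotExp θ) := by fun_prop
    exact (this.measurable.comp hX).aestronglyMeasurable.mul hA.aestronglyMeasurable
  · filter_upwards [eventually_abs_lt_pi_div_two] with θ hθ
    filter_upwards [hX_pos] with ω hω
    have norm_rotExp_le_one : ‖rotExp θ (X ω)‖ ≤ 1 := by
      rw [norm_rotExp, Real.exp_le_one_iff, neg_nonpos]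
      exact (mul_pos (cos_pos_of_abs_lt_pi_div_two hθ) hω).le
    rw [norm_mul]
    exact mul_le_of_le_one_left (norm_nonneg _) norm_rotExp_le_one
  · have : Continuous fun θ : ℝ ↦ rotExp θ (X ω) * A ω := by fun_prop
    exact (this.tendsto _).mono_left nhdsWithin_le_nhds

theorem integrable_prod_rotGamma_mul_cpow_neg_mul {c θ : ℝ} (hc : 0 < c) (hθ : |θ| < π / 2)
    (hX : Measurable X) (hX_pos : ∀ᵐ ω ∂μ, 0 < X ω) (hA : AEStronglyMeasurable A μ)
    (hXA : Integrable (fun ω ↦ (X ω : ℂ) ^ (-(c : ℂ)) * A ω) μ) :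
    Integrable (fun p : ℝ × Ω ↦
      rotGamma θ (c + p.1 * I) * ((X p.2 : ℂ) ^ (-(c + p.1 * I)) * A p.2)) (volume.prod μ) := by
  have measurable_cpow : Measurable fun p : ℝ × Ω ↦ (X p.2 : ℂ) ^ (-(c + p.1 * I)) := by fun_prop
  have measurable_rotGamma : Measurable fun p : ℝ × Ω ↦ rotGamma θ (c + p.1 * I) :=
    (continuous_rotGamma_vertical hc θ).measurable.comp measurable_fst
  refine ((verticalIntegrable_rotGamma hc hθ).mul_prod hXA).congr'
    (measurable_rotGamma.aestronglyMeasurable.mul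
      (measurable_cpow.aestronglyMeasurable.mul hA.comp_snd)) ?_
  filter_upwards [Measure.quasiMeasurePreserving_snd.ae hX_pos] with p hp
  simp only [norm_mul, norm_ofReal_cpow_neg_eq_of_re_eq hp (z := c + p.1 * I) (w := c) (by simp)]

variable [SFinite μ]

theorem aestronglyMeasurable_complexMoment (hX : Measurable X) (hA : AEStronglyMeasurable A μ)
    (c : ℝ) : AEStronglyMeasurable fun s : ℝ ↦ complexMoment μ X A (c + s * I) := by
  have measurable_cpow : Measurable fun p : ℝ × Ω ↦ (X p.2 : ℂ) ^ (-(c + p.1 * I)) := by fun_prop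
  exact (measurable_cpow.aestronglyMeasurable.mul (hA.comp_snd (μ := volume))).integral_prod_right'

theorem integral_rotExp_mul_eq_integral_rotGamma_mul {c θ : ℝ} (hc : 0 < c) (hθ : |θ| < π / 2)
    (hX : Measurable X) (hX_pos : ∀ᵐ ω ∂μ, 0 < X ω) (hA : AEStronglyMeasurable A μ)
    (hXA : Integrable (fun ω ↦ (X ω : ℂ) ^ (-(c : ℂ)) * A ω) μ) :
    ∫ ω, rotExp θ (X ω) * A ω ∂μ =
      1 / (2 * π) * ∫ s : ℝ, rotGamma θ (c + s * I) * complexMoment μ X A (c + s * I) := by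
  calc ∫ ω, rotExp θ (X ω) * A ω ∂μ
      = ∫ ω, 1 / (2 * π) * (∫ s : ℝ, rotGamma θ (c + s * I) *
          ((X ω : ℂ) ^ (-(c + s * I)) * A ω)) ∂μ := by
        refine integral_congr_ae (hX_pos.mono fun ω hω ↦ ?_)
        simp only [rotExp_eq_integral_vertical hc hθ hω, mul_assoc, ← integral_mul_const]
        congr! 3
        ring
    _ = 1 / (2 * π) * ∫ s : ℝ, ∫ ω, rotGamma θ (c + s * I) *
          ((X ω : ℂ) ^ (-(c + s * I)) * A ω) ∂μ := by
        rw [integral_const_mul, ← integral_integral_swap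
          (f := fun s : ℝ ↦ fun ω ↦ rotGamma θ (c + s * I) * ((X ω : ℂ) ^ (-(c + s * I)) * A ω))
          (integrable_prod_rotGamma_mul_cpow_neg_mul hc hθ hX hX_pos hA hXA)]
    _ = 1 / (2 * π) * ∫ s : ℝ, rotGamma θ (c + s * I) * complexMoment μ X A (c + s * I) := by
        simp only [complexMoment, integral_const_mul]

/-- The formula at `θ = π / 2` is the limit of `integral_rotExp_mul_eq_integral_rotGamma_mul` as
`θ ↑ π / 2`. -/
theorem integral_cexp_I_mul_eq_integral_rotGamma_mul {c : ℝ} (hc : 0 < c)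
    (hX : Measurable X) (hX_pos : ∀ᵐ ω ∂μ, 0 < X ω) (hA : Integrable A μ)
    (hXA : Integrable (fun ω ↦ (X ω : ℂ) ^ (-(c : ℂ)) * A ω) μ)
    (hM : Integrable fun s : ℝ ↦ (1 + |s|) ^ c * ‖complexMoment μ X A (c + s * I)‖) :
    ∫ ω, cexp (I * X ω) * A ω ∂μ =
      1 / (2 * π) * ∫ s : ℝ, rotGamma (π / 2) (c + s * I) * complexMoment μ X A (c + s * I) := by
  refine tendsto_nhds_unique (tendsto_integral_rotExp_mul hX hX_pos hA)
    (((tendsto_integral_rotGamma_mul hc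
      (aestronglyMeasurable_complexMoment hX hA.aestronglyMeasurable c) hM).const_mul _).congr' ?_)
  filter_upwards [eventually_abs_lt_pi_div_two] with θ hθ
  exact (integral_rotExp_mul_eq_integral_rotGamma_mul hc hθ hX hX_pos hA.aestronglyMeasurable
    hXA).symm

theorem integrable_and_integral_cexp_I_mul_const_mul_eq {c a : ℝ} (hc : 0 < c) (ha : 0 < a)
    (hX : Measurable X) (hX_pos : ∀ᵐ ω ∂μ, 0 < X ω) (hA : Integrable A μ)
    (hXA : Integrable (fun ω ↦ (X ω : ℂ) ^ (-(c : ℂ)) * A ω) μ)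
    (hM : Integrable fun s : ℝ ↦ (1 + |s|) ^ c * ‖complexMoment μ X A (c + s * I)‖) :
    Integrable (fun s : ℝ ↦ rotGamma (π / 2) (c + s * I) * (a : ℂ) ^ (-(c + s * I)) *
      complexMoment μ X A (c + s * I)) ∧
    ∫ ω, cexp (I * (a * X ω : ℝ)) * A ω ∂μ =
      1 / (2 * π) * ∫ s : ℝ, rotGamma (π / 2) (c + s * I) * (a : ℂ) ^ (-(c + s * I)) *
        complexMoment μ X A (c + s * I) := by
  have moment_eq : ∀ s : ℝ, complexMoment μ (fun ω ↦ a * X ω) A (c + s * I) =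
      (a : ℂ) ^ (-(c + s * I)) * complexMoment μ X A (c + s * I) :=
    fun s ↦ complexMoment_const_mul ha.le hX_pos _
  have scaled_growth : Integrable fun s : ℝ ↦
      (1 + |s|) ^ c * ‖complexMoment μ (fun ω ↦ a * X ω) A (c + s * I)‖ := by
    refine (hM.const_mul ‖(a : ℂ) ^ (-(c : ℂ))‖).congr (.of_forall fun s ↦ ?_)
    dsimp only
    rw [moment_eq, norm_mul,
      norm_ofReal_cpow_neg_eq_of_re_eq ha (z := c + s * I) (w := c) (by simp), mul_left_comm]
  have scaled_integrable : Integrable (fun ω ↦ ((a * X ω : ℝ) : ℂ) ^ (-(c : ℂ)) * A ω) μ := by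
    refine (hXA.const_mul ((a : ℂ) ^ (-(c : ℂ)))).congr (hX_pos.mono fun ω hω ↦ ?_)
    simp only [ofReal_mul, mul_cpow_ofReal_nonneg ha.le hω.le, mul_assoc]
  have scaled_measurable : Measurable fun ω ↦ a * X ω := hX.const_mul a
  simp only [mul_assoc, ← moment_eq]
  exact ⟨integrable_rotGamma_mul_of_integrable hc (abs_of_pos Real.pi_div_two_pos).le
      (aestronglyMeasurable_complexMoment scaled_measurable hA.aestronglyMeasurable c)
      scaled_growth,
    integral_cexp_I_mul_eq_integral_rotGamma_mul hc scaled_measurable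
      (hX_pos.mono fun ω ↦ mul_pos ha) hA scaled_integrable scaled_growth⟩

end

/-! ### Decay of Mellin transforms -/

section

open Complex Set Filter Topology Asymptotics

variable {E : Type*} [NormedAddCommGroup E] [NormedSpace ℂ E]

theorem norm_mellin_le {f : ℝ → E} {B R : ℝ} {s : ℂ} (hs : 0 < s.re) (hR : 0 ≤ R)
    (hfB : ∀ x, ‖f x‖ ≤ B) (hfR : EqOn f 0 (Ioi R)) :
    ‖mellin f s‖ ≤ B * (R ^ s.re / s.re) := by
  have mellin_eq : mellin f s = ∫ x in Ioc 0 R, (x : ℂ) ^ (s - 1) • f x :=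
    setIntegral_eq_of_subset_of_forall_sdiff_eq_zero measurableSet_Ioi Ioc_subset_Ioi_self
      fun x ⟨hx_pos, hx⟩ ↦ by
        rw [hfR (lt_of_not_ge fun hxR ↦ hx ⟨hx_pos, hxR⟩), Pi.zero_apply, smul_zero]
  have integrableOn_rpow : IntegrableOn (fun x : ℝ ↦ x ^ (s.re - 1)) (Ioc 0 R) :=
    (intervalIntegrable_iff_integrableOn_Ioc_of_le hR).1
      (intervalIntegral.intervalIntegrable_rpow' (by linarith))
  calc ‖mellin f s‖ ≤ ∫ x in Ioc 0 R, B * x ^ (s.re - 1) := by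
        rw [mellin_eq]
        refine norm_integral_le_of_norm_le (integrableOn_rpow.const_mul B)
          ((ae_restrict_mem measurableSet_Ioc).mono fun x hx ↦ ?_)
        rw [norm_smul, norm_cpow_eq_rpow_re_of_pos hx.1, sub_re, one_re, mul_comm]
        exact mul_le_mul_of_nonneg_right (hfB x) (Real.rpow_nonneg hx.1.le _)
    _ = B * (R ^ s.re / s.re) := by
        rw [integral_const_mul, ← intervalIntegral.integral_of_le hR,
          integral_rpow (.inl (by linarith)), sub_add_cancel, Real.zero_rpow hs.ne', sub_zero]

theorem mellinConvergent_of_continuous_of_eqOn_zero {g : ℝ → E} {R : ℝ} {s : ℂ}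
    (hs : 0 < s.re) (hg : Continuous g) (hgR : EqOn g 0 (Ioi R)) : MellinConvergent g s := by
  refine mellinConvergent_of_isBigO_rpow (a := s.re + 1) (b := 0)
    (hg.locallyIntegrable.locallyIntegrableOn _) ?_ (lt_add_one _) ?_ hs
  · exact (hgR.eventuallyEq_of_mem (Ioi_mem_atTop R)).trans_isBigO (isBigO_zero _ _)
  · simpa using ((hg.tendsto 0).isBigO_one ℝ).mono nhdsWithin_le_nhds

theorem eqOn_deriv_zero {g : ℝ → E} {U : Set ℝ} (hU : IsOpen U) (hg : EqOn g 0 U) :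
    EqOn (deriv g) 0 U := fun x hx ↦ by
  rw [hg.deriv hU hx, deriv_zero]

theorem mul_mellin_eq_neg_mellin_deriv {g : ℝ → ℂ} {R : ℝ} {s : ℂ} (hs : 0 < s.re)
    (hg : ContDiff ℝ 1 g) (hgR : EqOn g 0 (Ioi R)) :
    s * mellin g s = -mellin (deriv g) (s + 1) := by
  have hs0 : s ≠ 0 := by rintro rfl; simp at hs
  have convergent : MellinConvergent g s :=
    mellinConvergent_of_continuous_of_eqOn_zero hs hg.continuous hgR
  have deriv_convergent : MellinConvergent (deriv g) (s + 1) :=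
    mellinConvergent_of_continuous_of_eqOn_zero (by rw [add_re, one_re]; linarith)
      (hg.continuous_deriv le_rfl) (eqOn_deriv_zero isOpen_Ioi hgR)
  have tendsto_zero : Tendsto (g * fun x : ℝ ↦ (x : ℂ) ^ s) (𝓝[>] 0) (𝓝 0) := by
    have := (hg.continuous.mul (continuous_ofReal_cpow_const hs)).tendsto 0
    rw [Pi.mul_apply, ofReal_zero, zero_cpow hs0, mul_zero] at this
    exact this.mono_left nhdsWithin_le_nhds
  have tendsto_atTop : Tendsto (g * fun x : ℝ ↦ (x : ℂ) ^ s) atTop (𝓝 0) :=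
    tendsto_nhds_of_eventually_eq <| (eventually_gt_atTop R).mono fun x hx ↦ by simp [hgR hx]
  have by_parts := integral_Ioi_mul_deriv_eq_deriv_mul
    (fun x _ ↦ (hg.differentiable one_ne_zero x).hasDerivAt)
    (fun x hx ↦ hasDerivAt_ofReal_cpow_const (ne_of_gt hx) hs0)
    (IntegrableOn.congr_fun (convergent.const_mul s)
      (fun x _ ↦ by simp only [smul_eq_mul, Pi.mul_apply]; ring) measurableSet_Ioi)
    (IntegrableOn.congr_fun deriv_convergent
      (fun x _ ↦ by simp only [smul_eq_mul, Pi.mul_apply, add_sub_cancel_right]; ring)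
      measurableSet_Ioi)
    tendsto_zero tendsto_atTop
  calc s * mellin g s = ∫ x in Ioi (0 : ℝ), g x * (s * (x : ℂ) ^ (s - 1)) := by
        rw [mellin, ← integral_const_mul]
        congr! 2
        rw [smul_eq_mul]
        ring
    _ = -mellin (deriv g) (s + 1) := by
        rw [by_parts, sub_zero, zero_sub, mellin]
        congr! 3
        rw [smul_eq_mul, add_sub_cancel_right, mul_comm]

theorem norm_mellin_le_div_norm_sq {g : ℝ → ℂ} {B R : ℝ} {s : ℂ} (hs : 0 < s.re) (hR : 0 ≤ R)
    (hg : ContDiff ℝ 2 g) (hgR : EqOn g 0 (Ioi R)) (hB : ∀ x, ‖deriv (deriv g) x‖ ≤ B) :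
    ‖mellin g s‖ ≤ B * (R ^ (s.re + 2) / (s.re + 2)) / ‖s‖ ^ 2 := by
  have norm_pos : 0 < ‖s‖ := norm_pos_iff.2 (by rintro rfl; simp at hs)
  have hs1 : 0 < (s + 1).re := by rw [add_re, one_re]; linarith
  have hs2 : (s + 1 + 1).re = s.re + 2 := by simp only [add_re, one_re]; ring
  have norm_le_norm_add_one : ‖s‖ ≤ ‖s + 1‖ := by
    rw [norm_def, norm_def]
    refine Real.sqrt_le_sqrt ?_
    simp only [normSq_apply, add_re, one_re, add_im, one_im]
    nlinarith
  have contDiff_deriv : ContDiff ℝ 1 (deriv g) := hg.deriv' (n := 1)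
  have deriv_eqOn := eqOn_deriv_zero isOpen_Ioi hgR
  have integrated_twice : s * (s + 1) * mellin g s = mellin (deriv (deriv g)) (s + 1 + 1) := by
    rw [mul_right_comm, mul_mellin_eq_neg_mellin_deriv hs (hg.of_le one_le_two) hgR, neg_mul,
      mul_comm, mul_mellin_eq_neg_mellin_deriv hs1 contDiff_deriv deriv_eqOn, neg_neg]
  rw [le_div_iff₀ (by positivity)]
  calc ‖mellin g s‖ * ‖s‖ ^ 2 ≤ ‖s‖ * ‖s + 1‖ * ‖mellin g s‖ := by
        rw [sq, mul_comm]
        gcongr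
    _ = ‖mellin (deriv (deriv g)) (s + 1 + 1)‖ := by rw [← integrated_twice, norm_mul, norm_mul]
    _ ≤ B * (R ^ (s.re + 2) / (s.re + 2)) := by
        rw [← hs2]
        exact norm_mellin_le (by linarith) hR hB (eqOn_deriv_zero isOpen_Ioi deriv_eqOn)

end

section

variable {E F : Type*} [NormedAddCommGroup E] [NormedSpace ℝ E] [NormedAddCommGroup F]
  [NormedSpace ℝ F]

theorem deriv_comp_add_smul {b : E → F} (hb : Differentiable ℝ b) (x e : E) :
    deriv (fun v : ℝ ↦ b (x + v • e)) = fun v : ℝ ↦ fderiv ℝ b (x + v • e) e := by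
  funext v
  have hasDerivAt_line : HasDerivAt (fun v : ℝ ↦ x + v • e) e v := by
    simpa using ((hasDerivAt_id v).smul_const e).const_add x
  exact ((hb _).hasFDerivAt.comp_hasDerivAt v hasDerivAt_line).deriv

theorem exists_norm_deriv_deriv_comp_add_smul_le {b : E → F} (hb : ContDiff ℝ 2 b)
    (hb_supp : HasCompactSupport b) (e : E) :
    ∃ B, ∀ x (v : ℝ), ‖deriv (deriv fun v : ℝ ↦ b (x + v • e)) v‖ ≤ B := by
  have contDiff_fderiv_apply : ContDiff ℝ 1 fun y ↦ fderiv ℝ b y e :=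
    (hb.fderiv_right le_rfl).clm_apply contDiff_const
  obtain ⟨B, hB⟩ := ((hb_supp.fderiv_apply ℝ e).fderiv_apply ℝ e).exists_bound_of_continuous
    ((contDiff_fderiv_apply.continuous_fderiv one_ne_zero).clm_apply continuous_const)
  refine ⟨B, fun x v ↦ ?_⟩
  rw [deriv_comp_add_smul (hb.differentiable two_ne_zero),
    deriv_comp_add_smul (contDiff_fderiv_apply.differentiable one_ne_zero)]
  exact hB _

end

/-! ### Moments over the octant -/

section

open Complex Set

/-- The open positive octant, in the coordinates `(r, t, v)`. -/
def octant : Set (ℝ × ℝ × ℝ) :=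
  Ioi 0 ×ˢ Ioi 0 ×ˢ Ioi 0

/-- The phase `t v rᵏ`, in the coordinates `(r, t, v)`. -/
def monomialPhase (k : ℕ) (x : ℝ × ℝ × ℝ) : ℝ :=
  x.2.1 * x.2.2 * x.1 ^ k

variable {k : ℕ} {b : ℝ × ℝ × ℝ → ℂ}

theorem measurableSet_octant : MeasurableSet octant :=
  measurableSet_Ioi.prod (measurableSet_Ioi.prod measurableSet_Ioi)

theorem measurable_monomialPhase : Measurable (monomialPhase k) := by
  unfold monomialPhase
  fun_prop

theorem monomialPhase_pos {x : ℝ × ℝ × ℝ} (hx : x ∈ octant) : 0 < monomialPhase k x :=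
  mul_pos (mul_pos hx.2.1 hx.2.2) (pow_pos hx.1 k)

theorem monomialPhase_cpow_neg {x : ℝ × ℝ × ℝ} (hx : x ∈ octant) (z : ℂ) :
    (monomialPhase k x : ℂ) ^ (-z) =
      (x.1 : ℂ) ^ (-(k * z)) * ((x.2.1 : ℂ) ^ (-z) * (x.2.2 : ℂ) ^ (-z)) := by
  obtain ⟨hr, ht, hv⟩ : 0 < x.1 ∧ 0 < x.2.1 ∧ 0 < x.2.2 := hx
  rw [monomialPhase, ofReal_mul, mul_cpow_ofReal_nonneg (mul_pos ht hv).le (pow_pos hr k).le,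
    ofReal_mul, mul_cpow_ofReal_nonneg ht.le hv.le, mul_comm, ofReal_pow, ← mul_neg,
    cpow_nat_mul' (by simp [arg_ofReal_of_nonneg hr.le, Real.pi_pos])
      (by simp [arg_ofReal_of_nonneg hr.le, Real.pi_pos.le])]

theorem integrableOn_Ioc_cpow_neg {w : ℂ} (hw : w.re < 1) {R : ℝ} (hR : 0 ≤ R) :
    IntegrableOn (fun x : ℝ ↦ (x : ℂ) ^ (-w)) (Ioc 0 R) :=
  (intervalIntegrable_iff_integrableOn_Ioc_of_le hR).1
    (intervalIntegral.intervalIntegrable_cpow' (by simpa using hw))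

theorem integrableOn_octant_cpow_neg_mul {z : ℂ} (hz : z.re < 1) (hkz : k * z.re < 1)
    (hb : Continuous b) (hb_supp : HasCompactSupport b) :
    IntegrableOn (fun x ↦ (monomialPhase k x : ℂ) ^ (-z) * b x) octant := by
  obtain ⟨R, hR, hbR⟩ := hb_supp.exists_pos_le_norm
  obtain ⟨B, hB⟩ := hb_supp.exists_bound_of_continuous hb
  let box : Set (ℝ × ℝ × ℝ) := Ioc 0 R ×ˢ Ioc 0 R ×ˢ Ioc 0 R
  have measurableSet_box : MeasurableSet box :=
    measurableSet_Ioc.prod (measurableSet_Ioc.prod measurableSet_Ioc)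
  have box_subset : box ⊆ octant :=
    prod_mono Ioc_subset_Ioi_self (prod_mono Ioc_subset_Ioi_self Ioc_subset_Ioi_self)
  have weight_integrable : IntegrableOn (fun x : ℝ × ℝ × ℝ ↦
      (x.1 : ℂ) ^ (-(k * z)) * ((x.2.1 : ℂ) ^ (-z) * (x.2.2 : ℂ) ^ (-z))) box := by
    have in_r := integrableOn_Ioc_cpow_neg (w := k * z) (by simpa using hkz) hR.le
    have in_tv := integrableOn_Ioc_cpow_neg hz hR.le
    have := in_r.mul_prod (in_tv.mul_prod in_tv)
    rwa [Measure.prod_restrict, Measure.prod_restrict] at this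
  have eq_zero_of_notMem_box : ∀ x ∈ octant \ box, b x = 0 := fun x ⟨hx, hx_box⟩ ↦ by
    refine hbR x (le_of_not_gt fun hxR ↦ hx_box ?_)
    simp only [Prod.norm_def, max_lt_iff, Real.norm_eq_abs] at hxR
    exact ⟨⟨hx.1, (abs_lt.1 hxR.1).2.le⟩, ⟨hx.2.1, (abs_lt.1 hxR.2.1).2.le⟩,
      ⟨hx.2.2, (abs_lt.1 hxR.2.2).2.le⟩⟩
  refine IntegrableOn.of_forall_sdiff_eq_zero (s := box) ?_ measurableSet_octant
    fun x hx ↦ by rw [eq_zero_of_notMem_box x hx, mul_zero]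
  refine IntegrableOn.congr_fun (weight_integrable.mul_bdd (c := B) hb.aestronglyMeasurable
    (.of_forall hB)) (fun x hx ↦ ?_) measurableSet_box
  rw [monomialPhase_cpow_neg (box_subset hx)]

theorem setIntegral_prod_prod {α β γ E : Type*} [MeasurableSpace α] [MeasurableSpace β]
    [MeasurableSpace γ] [NormedAddCommGroup E] [NormedSpace ℝ E] {μ : Measure α} {ν : Measure β}
    {ρ : Measure γ} [SFinite μ] [SFinite ν] [SFinite ρ] {S : Set α} {T : Set β} {U : Set γ}
    {f : α × β × γ → E} (hf : IntegrableOn f (S ×ˢ T ×ˢ U) (μ.prod (ν.prod ρ))) :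
    ∫ p in S ×ˢ T ×ˢ U, f p ∂μ.prod (ν.prod ρ) =
      ∫ x in S, ∫ y in T, ∫ z in U, f (x, y, z) ∂ρ ∂ν ∂μ := by
  rw [setIntegral_prod _ hf]
  rw [IntegrableOn, ← Measure.prod_restrict] at hf
  exact integral_congr_ae (hf.prod_right_ae.mono fun x hx ↦ setIntegral_prod _ hx)

theorem complexMoment_octant_eq_mellin {z : ℂ} (hz : z.re < 1) (hkz : k * z.re < 1)
    (hb : Continuous b) (hb_supp : HasCompactSupport b) :
    complexMoment (volume.restrict octant) (monomialPhase k) b z =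
      mellin (fun r ↦ mellin (fun t ↦ mellin (fun v ↦ b (r, t, v)) (1 - z)) (1 - z))
        (1 - k * z) := by
  refine (setIntegral_prod_prod (integrableOn_octant_cpow_neg_mul hz hkz hb hb_supp)).trans ?_
  simp only [mellin, smul_eq_mul, ← integral_const_mul, sub_sub_cancel_left]
  refine setIntegral_congr_fun measurableSet_Ioi fun r hr ↦
    setIntegral_congr_fun measurableSet_Ioi fun t ht ↦
      setIntegral_congr_fun measurableSet_Ioi fun v hv ↦ ?_
  simp only [monomialPhase_cpow_neg (show (r, t, v) ∈ octant from ⟨hr, ht, hv⟩), mul_assoc]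

theorem norm_mellin_mellin_mellin_le {B R : ℝ} {s w : ℂ} (hs : 0 < s.re) (hw : 0 < w.re)
    (hR : 0 ≤ R) (hb : ContDiff ℝ 2 b) (hbR : ∀ x, R ≤ ‖x‖ → b x = 0)
    (hB : ∀ x (v : ℝ), ‖deriv (deriv fun v : ℝ ↦ b (x + v • (0, 0, 1))) v‖ ≤ B) :
    ‖mellin (fun r ↦ mellin (fun t ↦ mellin (fun v ↦ b (r, t, v)) s) s) w‖ ≤
      B * (R ^ (s.re + 2) / (s.re + 2)) / ‖s‖ ^ 2 * (R ^ s.re / s.re) * (R ^ w.re / w.re) := by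
  have eq_zero_of_lt_r : ∀ r t v, R < r → b (r, t, v) = 0 := fun r t v h ↦
    hbR _ (h.le.trans ((le_abs_self r).trans (norm_fst_le (r, t, v))))
  have eq_zero_of_lt_t : ∀ r t v, R < t → b (r, t, v) = 0 := fun r t v h ↦
    hbR _ (h.le.trans ((le_abs_self t).trans
      ((norm_fst_le (t, v)).trans (norm_snd_le (r, t, v)))))
  have eq_zero_of_lt_v : ∀ r t v, R < v → b (r, t, v) = 0 := fun r t v h ↦
    hbR _ (h.le.trans ((le_abs_self v).trans
      ((norm_snd_le (t, v)).trans (norm_snd_le (r, t, v)))))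
  have bound_v : ∀ r t, ‖mellin (fun v ↦ b (r, t, v)) s‖ ≤
      B * (R ^ (s.re + 2) / (s.re + 2)) / ‖s‖ ^ 2 := fun r t ↦
    norm_mellin_le_div_norm_sq hs hR (hb.comp (by fun_prop)) (eq_zero_of_lt_v r t)
      fun v ↦ by simpa using hB (r, t, 0) v
  have bound_t : ∀ r, ‖mellin (fun t ↦ mellin (fun v ↦ b (r, t, v)) s) s‖ ≤
      B * (R ^ (s.re + 2) / (s.re + 2)) / ‖s‖ ^ 2 * (R ^ s.re / s.re) := fun r ↦
    norm_mellin_le hs hR (bound_v r) fun t ht ↦ by simp [mellin, eq_zero_of_lt_t r t _ ht]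
  exact norm_mellin_le hw hR bound_t fun r hr ↦ by simp [mellin, eq_zero_of_lt_r r _ _ hr]

theorem exists_norm_complexMoment_octant_le {c : ℝ} (hc : c < 1) (hkc : k * c < 1)
    (hb : ContDiff ℝ 2 b) (hb_supp : HasCompactSupport b) :
    ∃ C, ∀ s : ℝ, ‖complexMoment (volume.restrict octant) (monomialPhase k) b (c + s * I)‖ ≤
      C / ‖1 - (c + s * I)‖ ^ 2 := by
  obtain ⟨R, hR, hbR⟩ := hb_supp.exists_pos_le_norm
  obtain ⟨B, hB⟩ := exists_norm_deriv_deriv_comp_add_smul_le hb hb_supp (0, 0, 1)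
  refine ⟨B * (R ^ (1 - c + 2) / (1 - c + 2)) * (R ^ (1 - c) / (1 - c)) *
    (R ^ (1 - k * c) / (1 - k * c)), fun s ↦ ?_⟩
  have re_one_sub : (1 - (c + s * I)).re = 1 - c := by simp
  have re_one_sub_mul : (1 - k * (c + s * I)).re = 1 - k * c := by simp
  have iterated_bound := norm_mellin_mellin_mellin_le (s := 1 - (c + s * I))
    (w := 1 - k * (c + s * I)) (by linarith) (by linarith) hR.le hb hbR hB
  rw [complexMoment_octant_eq_mellin (by simpa) (by simpa) hb.continuous hb_supp]
  refine iterated_bound.trans_eq ?_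
  rw [re_one_sub, re_one_sub_mul]
  ring

theorem mul_one_add_abs_le_norm_one_sub {c : ℝ} (hc : 0 ≤ c) (s : ℝ) :
    (1 - c) / 2 * (1 + |s|) ≤ ‖1 - (c + s * I)‖ := by
  have re_le : 1 - c ≤ ‖1 - (c + s * I)‖ := by
    simpa using re_le_norm (1 - (c + s * I))
  have im_le : |s| ≤ ‖1 - (c + s * I)‖ := by
    simpa using abs_im_le_norm (1 - (c + s * I))
  nlinarith [abs_nonneg s]

theorem integrable_rpow_mul_norm_complexMoment_octant {c : ℝ} (hc₀ : 0 ≤ c) (hc₁ : c < 1)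
    (hkc : k * c < 1) (hb : ContDiff ℝ 2 b) (hb_supp : HasCompactSupport b) :
    Integrable fun s : ℝ ↦ (1 + |s|) ^ c *
      ‖complexMoment (volume.restrict octant) (monomialPhase k) b (c + s * I)‖ := by
  obtain ⟨C, hC⟩ := exists_norm_complexMoment_octant_le hc₁ hkc hb hb_supp
  have integrable_bound : Integrable fun s : ℝ ↦
      |C| / ((1 - c) / 2) ^ 2 * (1 + ‖s‖) ^ (-(2 - c)) :=
    (integrable_one_add_norm (by rw [Module.finrank_self]; push_cast; linarith)).const_mul _
  have moment_measurable := aestronglyMeasurable_complexMoment (μ := volume.restrict octant)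
    (measurable_monomialPhase (k := k)) hb.continuous.aestronglyMeasurable c
  have weight_measurable : Measurable fun s : ℝ ↦ (1 + |s|) ^ c := by fun_prop
  refine integrable_bound.mono' (weight_measurable.aestronglyMeasurable.mul moment_measurable.norm)
    (.of_forall fun s ↦ ?_)
  have one_sub_pos : 0 < 1 - c := sub_pos.2 hc₁
  rw [Real.norm_of_nonneg (by positivity)]
  calc (1 + |s|) ^ c * ‖complexMoment (volume.restrict octant) (monomialPhase k) b (c + s * I)‖
      ≤ (1 + |s|) ^ c * (|C| / ((1 - c) / 2 * (1 + |s|)) ^ 2) := by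
        gcongr
        refine (hC s).trans ?_
        gcongr
        · exact le_abs_self C
        · exact mul_one_add_abs_le_norm_one_sub hc₀ s
    _ = |C| / ((1 - c) / 2) ^ 2 * (1 + ‖s‖) ^ (-(2 - c)) := by
        rw [neg_sub, Real.rpow_sub (by positivity), Real.rpow_two, Real.norm_eq_abs]
        field_simp

end

/-! ### Folding the quadrants onto the octant -/

section

open Complex Set

open scoped Real

variable {E : Type*} [NormedAddCommGroup E] [NormedSpace ℝ E]

theorem setOf_mul_pos_eq_union :
    {p : ℝ × ℝ | 0 < p.1 * p.2} = Ioi 0 ×ˢ Ioi 0 ∪ -(Ioi 0 ×ˢ Ioi 0) := by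
  ext p
  simp [mul_pos_iff]

theorem setIntegral_mul_pos_eq {f : ℝ × ℝ → E} (hf : IntegrableOn f (Ioi 0 ×ˢ Ioi 0))
    (hf_neg : IntegrableOn (fun p ↦ f (-p)) (Ioi 0 ×ˢ Ioi 0)) :
    ∫ p in {p : ℝ × ℝ | 0 < p.1 * p.2}, f p = ∫ p in Ioi 0 ×ˢ Ioi 0, (f p + f (-p)) := by
  have neg_preserving : MeasurePreserving (Neg.neg : ℝ × ℝ → ℝ × ℝ) :=
    Measure.measurePreserving_neg volume
  have neg_embedding : MeasurableEmbedding (Neg.neg : ℝ × ℝ → ℝ × ℝ) :=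
    (MeasurableEquiv.neg (ℝ × ℝ)).measurableEmbedding
  have measurableSet_quadrant : MeasurableSet (Ioi (0 : ℝ) ×ˢ Ioi (0 : ℝ)) :=
    measurableSet_Ioi.prod measurableSet_Ioi
  have disjoint_quadrants :
      Disjoint (Ioi (0 : ℝ) ×ˢ Ioi (0 : ℝ)) (-(Ioi (0 : ℝ) ×ˢ Ioi (0 : ℝ))) := by
    refine Set.disjoint_left.2 fun p hp hp_neg ↦ ?_
    exact lt_asymm hp.1 (neg_pos.1 (show 0 < -p.1 from hp_neg.1))
  have integrableOn_neg : IntegrableOn f (-(Ioi 0 ×ˢ Ioi 0)) := by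
    have := (neg_preserving.integrableOn_comp_preimage neg_embedding (f := f)
      (s := -(Ioi 0 ×ˢ Ioi 0))).1
    rw [Set.neg_preimage, neg_neg] at this
    exact this hf_neg
  have integral_neg : ∫ p in -(Ioi 0 ×ˢ Ioi 0), f p = ∫ p in Ioi 0 ×ˢ Ioi 0, f (-p) := by
    rw [← neg_preserving.setIntegral_preimage_emb neg_embedding, Set.neg_preimage, neg_neg]
  rw [setOf_mul_pos_eq_union, setIntegral_union disjoint_quadrants measurableSet_quadrant.neg hf
    integrableOn_neg, integral_neg, integral_add hf hf_neg]

theorem integral_Ioi_setIntegral_mul_pos_eq {f : ℝ × ℝ × ℝ → E} (hf : IntegrableOn f octant)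
    (hf_neg : IntegrableOn (fun x ↦ f (x.1, -x.2)) octant) :
    ∫ r in Ioi (0 : ℝ), ∫ p in {p : ℝ × ℝ | 0 < p.1 * p.2}, f (r, p) =
      ∫ x in octant, (f x + f (x.1, -x.2)) := by
  refine Eq.trans ?_ (setIntegral_prod _ (hf.add hf_neg)).symm
  rw [IntegrableOn, octant, Measure.volume_eq_prod, ← Measure.prod_restrict] at hf hf_neg
  refine integral_congr_ae ?_
  filter_upwards [hf.prod_right_ae, hf_neg.prod_right_ae] with r hr hr_neg
  exact setIntegral_mul_pos_eq hr hr_neg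

/-- The two values of an amplitude `a(t, r, v)` at `±(t, v)`, added up and read in the coordinates
`(r, t, v)`: it carries integrals over `{t v > 0}` to integrals over the octant. -/
def foldedAmplitude (a : ℝ × ℝ × ℝ → ℂ) (x : ℝ × ℝ × ℝ) : ℂ :=
  a (x.2.1, x.1, x.2.2) + a (-x.2.1, x.1, -x.2.2)

variable {k : ℕ} {a : ℝ × ℝ × ℝ → ℂ}

theorem hasCompactSupport_comp_of_norm_eq {V W F : Type*} [NormedAddCommGroup V] [ProperSpace V]
    [NormedAddCommGroup W] [Zero F] {f : W → F} (hf : HasCompactSupport f) {T : V → W}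
    (hT : ∀ x, ‖T x‖ = ‖x‖) : HasCompactSupport fun x ↦ f (T x) := by
  obtain ⟨R, -, hR⟩ := hf.exists_pos_le_norm
  refine .intro (isCompact_closedBall 0 R) fun x hx ↦ hR _ ?_
  rw [mem_closedBall_zero_iff, not_le] at hx
  exact (hT x).symm ▸ hx.le

theorem hasCompactSupport_comp_swap (ha : HasCompactSupport a) :
    HasCompactSupport fun x : ℝ × ℝ × ℝ ↦ a (x.2.1, x.1, x.2.2) :=
  hasCompactSupport_comp_of_norm_eq ha fun x ↦ by simp only [Prod.norm_def, max_left_comm]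

theorem hasCompactSupport_comp_swap_neg (ha : HasCompactSupport a) :
    HasCompactSupport fun x : ℝ × ℝ × ℝ ↦ a (-x.2.1, x.1, -x.2.2) :=
  hasCompactSupport_comp_of_norm_eq ha fun x ↦ by
    simp only [Prod.norm_def, norm_neg, max_left_comm]

theorem contDiff_foldedAmplitude {n : WithTop ℕ∞} (ha : ContDiff ℝ n a) :
    ContDiff ℝ n (foldedAmplitude a) :=
  (ha.comp (g := a) (f := fun x : ℝ × ℝ × ℝ ↦ (x.2.1, x.1, x.2.2)) (by fun_prop)).add
    (ha.comp (g := a) (f := fun x : ℝ × ℝ × ℝ ↦ (-x.2.1, x.1, -x.2.2)) (by fun_prop))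

theorem hasCompactSupport_foldedAmplitude (ha : HasCompactSupport a) :
    HasCompactSupport (foldedAmplitude a) :=
  (hasCompactSupport_comp_swap ha).add (hasCompactSupport_comp_swap_neg ha)

theorem integral_Ioi_setIntegral_mul_pos_eq_foldedAmplitude {φ : ℝ → ℂ} (ha : Continuous a)
    (ha_supp : HasCompactSupport a)
    (hφ : ∀ b : ℝ × ℝ × ℝ → ℂ, Continuous b → HasCompactSupport b →
      IntegrableOn (fun x ↦ φ (monomialPhase k x) * b x) octant) :
    ∫ r in Ioi (0 : ℝ), ∫ p in {p : ℝ × ℝ | 0 < p.1 * p.2},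
        φ (p.1 * p.2 * r ^ k) * a (p.1, r, p.2) =
      ∫ x in octant, φ (monomialPhase k x) * foldedAmplitude a x := by
  have monomialPhase_neg : ∀ x : ℝ × ℝ × ℝ, monomialPhase k (x.1, -x.2) = monomialPhase k x :=
    fun x ↦ by simp [monomialPhase]
  have integrable_pos := hφ _ (by fun_prop) (hasCompactSupport_comp_swap ha_supp)
  have integrable_neg := hφ _ (by fun_prop) (hasCompactSupport_comp_swap_neg ha_supp)
  refine (integral_Ioi_setIntegral_mul_pos_eq integrable_pos ?_).trans ?_
  · simpa only [monomialPhase_neg, Prod.fst_neg, Prod.snd_neg] using integrable_neg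
  · simp only [monomialPhase_neg, foldedAmplitude, mul_add, Prod.fst_neg, Prod.snd_neg]

theorem integrableOn_octant_cexp_I_mul_mul {b : ℝ × ℝ × ℝ → ℂ} (lam : ℝ) (hb : Continuous b)
    (hb_supp : HasCompactSupport b) :
    IntegrableOn (fun x ↦ cexp (I * (lam * monomialPhase k x : ℝ)) * b x) octant := by
  have measurable_phase := measurable_monomialPhase (k := k)
  refine (hb.integrable_of_hasCompactSupport hb_supp).integrableOn.bdd_mul (c := 1)
    (Measurable.aestronglyMeasurable (by fun_prop)) (.of_forall fun x ↦ ?_)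
  rw [mul_comm, norm_exp_ofReal_mul_I]

end

theorem stmt_11_general (k : ℕ) (a : ℝ × ℝ × ℝ → ℂ) (ha : ContDiff ℝ 2 a)
    (hca : HasCompactSupport a) (lam c : ℝ) (hlam : 0 < lam) (hc0 : 0 < c) (hc1 : c < 1)
    (hkc : k * c < 1) (M : ℂ → ℂ)
    (hM : ∀ z : ℂ, z.re = c →
      M z = ∫ r in Set.Ioi (0:ℝ), ∫ p in {p : ℝ × ℝ | 0 < p.1 * p.2},
        (((p.1 * p.2 * r ^ k : ℝ)) : ℂ) ^ (-z) * a (p.1, r, p.2)) :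
    Integrable (fun s : ℝ =>
      Complex.exp (Complex.I * Real.pi * ((c : ℂ) + (s : ℂ) * Complex.I) / 2) *
        Complex.Gamma ((c : ℂ) + (s : ℂ) * Complex.I) *
        ((lam : ℂ) ^ (-((c : ℂ) + (s : ℂ) * Complex.I))) *
        M ((c : ℂ) + (s : ℂ) * Complex.I)) ∧
    (∫ r in Set.Ioi (0:ℝ), ∫ p in {p : ℝ × ℝ | 0 < p.1 * p.2},
        Complex.exp (Complex.I * ((lam * p.1 * p.2 * r ^ k : ℝ) : ℂ)) * a (p.1, r, p.2))
      = (1 / (2 * (Real.pi : ℂ))) *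
          ∫ s : ℝ,
            Complex.exp (Complex.I * Real.pi * ((c : ℂ) + (s : ℂ) * Complex.I) / 2) *
              Complex.Gamma ((c : ℂ) + (s : ℂ) * Complex.I) *
              ((lam : ℂ) ^ (-((c : ℂ) + (s : ℂ) * Complex.I))) *
              M ((c : ℂ) + (s : ℂ) * Complex.I) := by
  have hb := contDiff_foldedAmplitude ha
  have hb_supp := hasCompactSupport_foldedAmplitude hca
  have M_eq : ∀ s : ℝ, M (c + s * Complex.I) = complexMoment (volume.restrict octant)
      (monomialPhase k) (foldedAmplitude a) (c + s * Complex.I) := fun s ↦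
    (hM _ (by simp)).trans <| integral_Ioi_setIntegral_mul_pos_eq_foldedAmplitude
      (φ := fun x ↦ (x : ℂ) ^ (-(c + s * Complex.I))) ha.continuous hca
      fun b ↦ integrableOn_octant_cpow_neg_mul (by simpa) (by simpa)
  have oscillatory_eq := integral_Ioi_setIntegral_mul_pos_eq_foldedAmplitude (k := k)
    (φ := fun x ↦ Complex.exp (Complex.I * (lam * x : ℝ))) ha.continuous hca
    fun b ↦ integrableOn_octant_cexp_I_mul_mul lam
  simp only [mul_assoc lam]
  simp only [oscillatory_eq, M_eq, ← rotGamma_pi_div_two]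
  exact integrable_and_integral_cexp_I_mul_const_mul_eq hc0 hlam measurable_monomialPhase
    ((ae_restrict_mem measurableSet_octant).mono fun x ↦ monomialPhase_pos)
    (hb.continuous.integrable_of_hasCompactSupport hb_supp).integrableOn
    (integrableOn_octant_cpow_neg_mul (by simpa) (by simpa) hb.continuous hb_supp)
    (integrable_rpow_mul_norm_complexMoment_octant hc0.le hc1 hkc hb hb_supp)

/-- the Mellin–Barnes representation of the oscillatory integral:
for `a` smooth compactly supported, `λ > 0` and `0 < c < 1/k`,
`∫₀^∞ ∫_{tv>0} e^{iλ t v rᵏ} a(t,r,v) dt dv dr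
  = (1/2π) ∫_ℝ e^{iπ(c+is)/2} Γ(c+is) λ^{−(c+is)} M(c+is) ds`,
with `M(z) = ∫₀^∞ ∫_{tv>0} (t v rᵏ)^{−z} a(t,r,v) dt dv dr`, the `s`-integral on
the right converging absolutely. -/
theorem stmt_11 (k : ℕ) (hk : 1 ≤ k)
    (a : ℝ × ℝ × ℝ → ℂ) (ha : ContDiff ℝ (⊤ : ℕ∞) a) (hca : HasCompactSupport a)
    (lam c : ℝ) (hlam : 0 < lam) (hc0 : 0 < c) (hc1 : c < 1 / (k : ℝ))
    (M : ℂ → ℂ)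
    (hM : ∀ z : ℂ, 0 < z.re → z.re < 1 / (k : ℝ) →
      M z = ∫ r in Set.Ioi (0:ℝ), ∫ p in {p : ℝ × ℝ | 0 < p.1 * p.2},
        (((p.1 * p.2 * r ^ k : ℝ)) : ℂ) ^ (-z) * a (p.1, r, p.2)) :
    Integrable (fun s : ℝ =>
      Complex.exp (Complex.I * Real.pi * ((c : ℂ) + (s : ℂ) * Complex.I) / 2) *
        Complex.Gamma ((c : ℂ) + (s : ℂ) * Complex.I) *
        ((lam : ℂ) ^ (-((c : ℂ) + (s : ℂ) * Complex.I))) *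
        M ((c : ℂ) + (s : ℂ) * Complex.I)) ∧
    (∫ r in Set.Ioi (0:ℝ), ∫ p in {p : ℝ × ℝ | 0 < p.1 * p.2},
        Complex.exp (Complex.I * ((lam * p.1 * p.2 * r ^ k : ℝ) : ℂ)) * a (p.1, r, p.2))
      = (1 / (2 * (Real.pi : ℂ))) *
          ∫ s : ℝ,
            Complex.exp (Complex.I * Real.pi * ((c : ℂ) + (s : ℂ) * Complex.I) / 2) *
              Complex.Gamma ((c : ℂ) + (s : ℂ) * Complex.I) *
              ((lam : ℂ) ^ (-((c : ℂ) + (s : ℂ) * Complex.I))) *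
              M ((c : ℂ) + (s : ℂ) * Complex.I) := by
  have hk0 : (0 : ℝ) < k := by exact_mod_cast hk
  have hkc : k * c < 1 := by rwa [lt_div_iff₀' hk0] at hc1
  have hc : c < 1 := hc1.trans_le (div_le_self zero_le_one (by exact_mod_cast hk))
  exact stmt_11_general k a (contDiff_infty.1 ha 2) hca lam c hlam hc0 hc hkc M
    fun z hz ↦ hM z (hz ▸ hc0) (hz ▸ hc1)
end
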